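/- arXiv:1607.00852 — 3 statements merged into one kernel-verified Lean document; each statement's English description precedes it below -/
import Mathlib

section
/- Mean Value Property II: Let Γ ⊆ S² be open (in S²) and let U : S² → ℝ be continuous on Γ. Then the degree-zero homogeneous extension V(x) = U(x/‖x‖) is twice continuously differentiable with vanishing Euclidean Laplacian on the open cone C(Γ) if and only if for every ξ ∈ Γ, every ρ ∈ (0,2) such that the closed cap {η ∈ S² : 1 − ξ·η ≤ ρ} is contained in Γ, and every orthonormal pair e₁, e₂ perpendicular to ξ, one has U(ξ) = (1/(2π))·∫₀^{2π} U((1−ρ)ξ + √(ρ(2−ρ))·(cos θ · e₁ + sin θ · e₂)) dθ. (The right-hand side equals 1/(2π√(ρ(2−ρ))) times the arc-length integral of U over the boundary circle ∂Γ_ρ(ξ).) -/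
/-!
Both directions work with the degree-zero extension `V`, which is constant on rays.

*Harmonic implies mean value.* Stereographic projection from `-ξ` maps the caps about `ξ` to discs
about the origin and is conformal, so the Laplacian of `V` composed with its inverse is a positive
multiple of the Laplacian of `V` (`laplacian_comp_stereo`); homogeneity is what removes the radial
second derivative.  Thus `V` becomes a planar harmonic function on a neighbourhood of a closed disc,
the boundary circle of the cap becomes a centred circle with the same angular parameter, and the
planar mean value property gives the claim (`circle_mean_of_harmonic`).

*Mean value implies harmonic.* Averaging over the rotations about the axis through `x` turns the
means over circles into a mean of `V` against a smooth radial bump (`integral_rot`,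
`integral_ker_mul`).  Locally `V` is therefore the integral of a kernel depending smoothly on the
centre, so it is smooth (`contDiffAt_of_hasCircleMean`).  Finally, comparing the second-order Taylor
expansion of `V` at a point with its means over shrinking circles about that point shows that the
tangential trace of the Hessian vanishes; the radial second derivative is zero by homogeneity, so
the Laplacian vanishes (`lap_eq_zero_of_hasCircleMean`).
-/

open MeasureTheory Real intervalIntegral
open scoped RealInnerProductSpace

noncomputable section

/-- ℝ³ as Euclidean space. -/
abbrev E3 : Type := EuclideanSpace ℝ (Fin 3)

/-- The canonical surface measure on the unit sphere S² ⊆ ℝ³ (the 2-dimensional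
Hausdorff measure restricted to the sphere); it satisfies σ(S²) = 4π. -/
def sphereMeasure : Measure E3 := (μH[2] : Measure E3).restrict (Metric.sphere (0 : E3) 1)

/-- The coordinate Laplacian of a function u : ℝ³ → ℝ. -/
def lap (u : E3 → ℝ) (x : E3) : ℝ :=
  ∑ i : Fin 3, fderiv ℝ (fun y => fderiv ℝ u y (EuclideanSpace.single i 1)) x
    (EuclideanSpace.single i 1)

/-- The open cone over a subset Γ of the unit sphere. -/
def cone (Γ : Set E3) : Set E3 := {x : E3 | x ≠ 0 ∧ ‖x‖⁻¹ • x ∈ Γ}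

/-- The open spherical cap with center ζ and radius ρ. -/
def cap (ρ : ℝ) (ζ : E3) : Set E3 :=
  {η : E3 | η ∈ Metric.sphere (0 : E3) 1 ∧ 1 - ⟪ζ, η⟫ < ρ}



/-! ### Orthonormal frames and the Laplacian in a frame -/

lemma exists_onb_of_triple {u v w : E3} (hu : ‖u‖ = 1) (hv : ‖v‖ = 1) (hw : ‖w‖ = 1)
    (huv : ⟪u, v⟫ = 0) (huw : ⟪u, w⟫ = 0) (hvw : ⟪v, w⟫ = 0) :
    ∃ b : OrthonormalBasis (Fin 3) ℝ E3, b 0 = u ∧ b 1 = v ∧ b 2 = w := by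
  have hon : Orthonormal ℝ ![u, v, w] := by
    have hvu := (real_inner_comm u v).trans huv
    have hwu := (real_inner_comm u w).trans huw
    have hwv := (real_inner_comm v w).trans hvw
    rw [orthonormal_iff_ite]
    intro i j
    fin_cases i <;> fin_cases j <;> simp_all
  have hc : Fintype.card (Fin 3) = Module.finrank ℝ E3 := by simp
  let b0 := basisOfOrthonormalOfCardEqFinrank hon hc
  have hb0 : ⇑b0 = ![u, v, w] := coe_basisOfOrthonormalOfCardEqFinrank hon hc
  refine ⟨b0.toOrthonormalBasis (by rw [hb0]; exact hon), ?_, ?_, ?_⟩ <;> simp [hb0]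

lemma exists_frame {ξ : E3} (hξ : ‖ξ‖ = 1) :
    ∃ e₁ e₂ : E3, ‖e₁‖ = 1 ∧ ‖e₂‖ = 1 ∧ ⟪e₁, e₂⟫ = 0 ∧ ⟪ξ, e₁⟫ = 0 ∧ ⟪ξ, e₂⟫ = 0 := by
  have hon : Orthonormal ℝ (({0} : Set (Fin 3)).domRestrict (fun _ : Fin 3 => ξ)) := by
    refine ⟨fun i => by simpa using hξ, fun i j hij => ?_⟩
    exact absurd (Subsingleton.elim i j) hij
  obtain ⟨b, hb⟩ := hon.exists_orthonormalBasis_extension_of_card_eq (by simp)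
  have h0 : b 0 = ξ := hb 0 (by simp)
  refine ⟨b 1, b 2, b.norm_eq_one 1, b.norm_eq_one 2, ?_, ?_, ?_⟩
  · exact b.inner_eq_zero (by decide)
  · rw [← h0]; exact b.inner_eq_zero (by decide)
  · rw [← h0]; exact b.inner_eq_zero (by decide)

/-- At a point where `u` is `C²`, the coordinate Laplacian is the trace of the second derivative,
computed in any orthonormal basis. -/
lemma lap_eq_sum {u : E3 → ℝ} {x : E3} (hu : ContDiffAt ℝ 2 u x)
    (b : OrthonormalBasis (Fin 3) ℝ E3) :
    lap u x = ∑ i, fderiv ℝ (fderiv ℝ u) x (b i) (b i) := by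
  have hd : DifferentiableAt ℝ (fderiv ℝ u) x :=
    (hu.fderiv_right (m := 1) (by norm_num)).differentiableAt (by norm_num)
  have key : ∀ b : OrthonormalBasis (Fin 3) ℝ E3, Laplacian.laplacian u x =
      ∑ i, fderiv ℝ (fderiv ℝ u) x (b i) (b i) := by
    intro b
    rw [InnerProductSpace.laplacian_eq_iteratedFDeriv_orthonormalBasis u b]
    simp [iteratedFDeriv_two_apply]
  rw [← key b, key (EuclideanSpace.basisFun (Fin 3) ℝ)]
  unfold lap
  refine Finset.sum_congr rfl fun i _ => ?_
  rw [fderiv_clm_apply hd (by fun_prop)]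
  simp

lemma isOpen_cone {Γ : Set E3} (hΓopen : IsOpen {p : Metric.sphere (0 : E3) 1 | (p : E3) ∈ Γ}) :
    IsOpen (cone Γ) := by
  obtain ⟨O, hO, hOΓ⟩ := isOpen_induced_iff.1 hΓopen
  have hmem : ∀ p : E3, p ∈ Metric.sphere (0 : E3) 1 → (p ∈ O ↔ p ∈ Γ) := by
    intro p hp
    have := Set.ext_iff.1 hOΓ ⟨p, hp⟩
    simpa using this
  have hc : ContinuousOn (fun x : E3 => ‖x‖⁻¹ • x) {x | x ≠ 0} := by
    refine ContinuousOn.smul (ContinuousOn.inv₀ continuous_norm.continuousOn ?_) continuousOn_id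
    intro x hx; simpa using hx
  have h2 := hc.isOpen_inter_preimage isOpen_ne hO
  convert h2 using 1
  ext x
  refine and_congr_right fun hx => ?_
  have : ‖x‖⁻¹ • x ∈ Metric.sphere (0 : E3) 1 := by
    simp [norm_smul, inv_mul_cancel₀ (norm_ne_zero_iff.2 hx)]
  exact (hmem _ this).symm

lemma smul_mem_cone {Γ : Set E3} {x : E3} {t : ℝ} (ht : 0 < t) :
    t • x ∈ cone Γ ↔ x ∈ cone Γ := by
  have h : ‖t • x‖⁻¹ • (t • x) = ‖x‖⁻¹ • x := by
    rw [norm_smul, smul_smul, Real.norm_of_nonneg ht.le, mul_inv]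
    congr 1; field_simp
  simp only [cone, Set.mem_ofPred_eq, h, ne_eq, smul_eq_zero, ht.ne', false_or]

lemma mem_cone_of_mem {Γ : Set E3} (hΓsub : Γ ⊆ Metric.sphere (0 : E3) 1) {x : E3} (hx : x ∈ Γ) :
    x ∈ cone Γ := by
  have hn : ‖x‖ = 1 := by simpa using hΓsub hx
  refine ⟨fun h => by simp [h] at hn, by simpa [hn] using hx⟩

lemma mem_of_mem_cone {Γ : Set E3} {x : E3} (hn : ‖x‖ = 1) (hx : x ∈ cone Γ) : x ∈ Γ := by
  simpa [hn] using hx.2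

/-! ### Derivatives of functions homogeneous of degree zero -/

section Homogeneous

variable {V : E3 → ℝ}

/-- Euler's relation for functions homogeneous of degree zero. -/
lemma fderiv_self_eq_zero (hh : ∀ (t : ℝ) (x : E3), 0 < t → V (t • x) = V x) {x : E3}
    (hd : DifferentiableAt ℝ V x) : fderiv ℝ V x x = 0 := by
  have h1 : HasDerivAt (fun t : ℝ => t • x) ((1 : ℝ) • x) 1 := (hasDerivAt_id _).smul_const x
  have hd' : HasFDerivAt V (fderiv ℝ V x) ((1 : ℝ) • x) := by
    rw [one_smul]; exact hd.hasFDerivAt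
  have h2 := hd'.comp_hasDerivAt (1 : ℝ) h1
  have h3 : HasDerivAt (V ∘ fun t : ℝ => t • x) 0 1 := by
    refine (hasDerivAt_const (1 : ℝ) (V x)).congr_of_eventuallyEq ?_
    filter_upwards [lt_mem_nhds (zero_lt_one' ℝ)] with t ht
    exact hh t x ht
  simpa using h2.unique h3

/-- The derivative of Euler's relation. -/
lemma fderiv_fderiv_self (hh : ∀ (t : ℝ) (x : E3), 0 < t → V (t • x) = V x) {x : E3}
    (hC : ContDiffAt ℝ 2 V x) (v : E3) :
    fderiv ℝ (fderiv ℝ V) x v x = - fderiv ℝ V x v := by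
  have hd : DifferentiableAt ℝ (fderiv ℝ V) x :=
    (hC.fderiv_right (m := 1) (by norm_num)).differentiableAt (by norm_num)
  have h1 := hd.hasFDerivAt.clm_apply (hasFDerivAt_id x)
  have h2 : HasFDerivAt (fun y => fderiv ℝ V y (id y)) (0 : E3 →L[ℝ] ℝ) x := by
    refine (hasFDerivAt_const (0 : ℝ) x).congr_of_eventuallyEq ?_
    filter_upwards [hC.eventually (by simp)] with y hy
    exact fderiv_self_eq_zero hh (hy.differentiableAt (by norm_num))
  have h3 := congrArg (fun L : E3 →L[ℝ] ℝ => L v) (h1.unique h2)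
  simp at h3
  linarith

/-- For a function homogeneous of degree zero, the radial direction does not contribute to the
Laplacian. -/
lemma lap_eq_tangential (hh : ∀ (t : ℝ) (x : E3), 0 < t → V (t • x) = V x) {x : E3} (hx : x ≠ 0)
    (hC : ContDiffAt ℝ 2 V x) {v w : E3} (hv : ‖v‖ = 1) (hw : ‖w‖ = 1) (hvw : ⟪v, w⟫ = 0)
    (hxv : ⟪x, v⟫ = 0) (hxw : ⟪x, w⟫ = 0) :
    lap V x = fderiv ℝ (fderiv ℝ V) x v v + fderiv ℝ (fderiv ℝ V) x w w := by
  have hn : ‖x‖ ≠ 0 := norm_ne_zero_iff.2 hx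
  obtain ⟨b, h0, h1, h2⟩ := exists_onb_of_triple (u := ‖x‖⁻¹ • x) (v := v) (w := w)
    (by simp [norm_smul, hn]) hv hw (by simp [inner_smul_left, hxv])
    (by simp [inner_smul_left, hxw]) hvw
  rw [lap_eq_sum hC b, Fin.sum_univ_three, h0, h1, h2]
  have : fderiv ℝ (fderiv ℝ V) x x x = 0 := by
    rw [fderiv_fderiv_self hh hC, fderiv_self_eq_zero hh (hC.differentiableAt (by norm_num)),
      neg_zero]
  simp [this]

end Homogeneous


/-! ### Stereographic coordinates -/

lemma inner_comb {ξ e₁ e₂ : E3} (hξ : ‖ξ‖ = 1) (h1 : ‖e₁‖ = 1) (h2 : ‖e₂‖ = 1)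
    (h12 : ⟪e₁, e₂⟫ = 0) (hξ1 : ⟪ξ, e₁⟫ = 0) (hξ2 : ⟪ξ, e₂⟫ = 0) (a b c a' b' c' : ℝ) :
    ⟪a • ξ + b • e₁ + c • e₂, a' • ξ + b' • e₁ + c' • e₂⟫ = a * a' + b * b' + c * c' := by
  have h21 := (real_inner_comm e₁ e₂).trans h12
  have h1ξ := (real_inner_comm ξ e₁).trans hξ1
  have h2ξ := (real_inner_comm ξ e₂).trans hξ2
  simp only [inner_add_left, inner_add_right, real_inner_smul_left, real_inner_smul_right,
    real_inner_self_eq_norm_sq, hξ, h1, h2, h12, hξ1, hξ2, h21, h1ξ, h2ξ]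
  ring

lemma norm_comb_sq {ξ e₁ e₂ : E3} (hξ : ‖ξ‖ = 1) (h1 : ‖e₁‖ = 1) (h2 : ‖e₂‖ = 1)
    (h12 : ⟪e₁, e₂⟫ = 0) (hξ1 : ⟪ξ, e₁⟫ = 0) (hξ2 : ⟪ξ, e₂⟫ = 0) (a b c : ℝ) :
    ‖a • ξ + b • e₁ + c • e₂‖ ^ 2 = a ^ 2 + b ^ 2 + c ^ 2 := by
  rw [← real_inner_self_eq_norm_sq, inner_comb hξ h1 h2 h12 hξ1 hξ2]; ring

/-- Inverse stereographic projection from `-ξ`, without the normalising factor `(1 + |z|²)⁻¹`: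
on functions homogeneous of degree zero that factor is immaterial, and this form is polynomial. -/
def stereo (ξ e₁ e₂ : E3) (z : ℂ) : E3 :=
  (1 - (z.re ^ 2 + z.im ^ 2)) • ξ + (2 * z.re) • e₁ + (2 * z.im) • e₂

/-- The derivative of `stereo` at `z` in the direction `u`. -/
def stereoDir (ξ e₁ e₂ : E3) (u z : ℂ) : E3 :=
  (-(2 * (z.re * u.re) + 2 * (z.im * u.im))) • ξ + (2 * u.re) • e₁ + (2 * u.im) • e₂

lemma norm_stereo {ξ e₁ e₂ : E3} (hξ : ‖ξ‖ = 1) (h1 : ‖e₁‖ = 1) (h2 : ‖e₂‖ = 1)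
    (h12 : ⟪e₁, e₂⟫ = 0) (hξ1 : ⟪ξ, e₁⟫ = 0) (hξ2 : ⟪ξ, e₂⟫ = 0) (z : ℂ) :
    ‖stereo ξ e₁ e₂ z‖ = 1 + (z.re ^ 2 + z.im ^ 2) := by
  rw [← sq_eq_sq₀ (norm_nonneg _) (by positivity), stereo,
    norm_comb_sq hξ h1 h2 h12 hξ1 hξ2]
  ring

lemma contDiff_stereo (ξ e₁ e₂ : E3) : ContDiff ℝ 2 (stereo ξ e₁ e₂) := by
  have hre : ContDiff ℝ 2 (fun z : ℂ => z.re) := Complex.reCLM.contDiff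
  have him : ContDiff ℝ 2 (fun z : ℂ => z.im) := Complex.imCLM.contDiff
  unfold stereo
  fun_prop

lemma exists_hasFDerivAt_stereo (ξ e₁ e₂ : E3) (z : ℂ) :
    ∃ L : ℂ →L[ℝ] E3, HasFDerivAt (stereo ξ e₁ e₂) L z ∧ ∀ u, L u = stereoDir ξ e₁ e₂ u z := by
  have hre : HasFDerivAt (fun z : ℂ => z.re) Complex.reCLM z := Complex.reCLM.hasFDerivAt
  have him : HasFDerivAt (fun z : ℂ => z.im) Complex.imCLM z := Complex.imCLM.hasFDerivAt
  refine ⟨_, (((((hre.pow 2).add (him.pow 2)).const_sub 1).smul_const ξ).add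
    ((hre.const_mul 2).smul_const e₁)).add ((him.const_mul 2).smul_const e₂), fun u => ?_⟩
  simp [stereoDir]
  ring_nf

lemma exists_hasFDerivAt_stereoDir (ξ e₁ e₂ : E3) (u z : ℂ) :
    ∃ L : ℂ →L[ℝ] E3, HasFDerivAt (stereoDir ξ e₁ e₂ u) L z ∧
      ∀ w, L w = (-(2 * (w.re * u.re) + 2 * (w.im * u.im))) • ξ := by
  have hre : HasFDerivAt (fun z : ℂ => z.re) Complex.reCLM z := Complex.reCLM.hasFDerivAt
  have him : HasFDerivAt (fun z : ℂ => z.im) Complex.imCLM z := Complex.imCLM.hasFDerivAt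
  refine ⟨_, ((((((hre.mul_const u.re).const_mul 2).add
    ((him.mul_const u.im).const_mul 2)).neg).smul_const ξ).add_const
    ((2 * u.re) • e₁)).add_const ((2 * u.im) • e₂), fun w => ?_⟩
  simp
  ring_nf

/-- Second-order chain rule for `V ∘ stereo`. -/
lemma fderiv_fderiv_comp_stereo {V : E3 → ℝ} (ξ e₁ e₂ : E3) (z : ℂ)
    (hC : ContDiffAt ℝ 2 V (stereo ξ e₁ e₂ z)) (u : ℂ) :
    fderiv ℝ (fderiv ℝ (V ∘ stereo ξ e₁ e₂)) z u u =
      fderiv ℝ (fderiv ℝ V) (stereo ξ e₁ e₂ z) (stereoDir ξ e₁ e₂ u z) (stereoDir ξ e₁ e₂ u z)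
      - 2 * (u.re ^ 2 + u.im ^ 2) * fderiv ℝ V (stereo ξ e₁ e₂ z) ξ := by
  have hP := contDiff_stereo ξ e₁ e₂
  have hf : ContDiffAt ℝ 2 (V ∘ stereo ξ e₁ e₂) z := hC.comp z hP.contDiffAt
  have hd : DifferentiableAt ℝ (fderiv ℝ (V ∘ stereo ξ e₁ e₂)) z :=
    (hf.fderiv_right (m := 1) (by norm_num)).differentiableAt (by norm_num)
  have hdV : DifferentiableAt ℝ (fderiv ℝ V) (stereo ξ e₁ e₂ z) :=
    (hC.fderiv_right (m := 1) (by norm_num)).differentiableAt (by norm_num)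
  obtain ⟨L, hL, hLu⟩ := exists_hasFDerivAt_stereo ξ e₁ e₂ z
  obtain ⟨M, hM, hMw⟩ := exists_hasFDerivAt_stereoDir ξ e₁ e₂ u z
  have hev : (fun y => fderiv ℝ (V ∘ stereo ξ e₁ e₂) y u) =ᶠ[nhds z]
      fun y => fderiv ℝ V (stereo ξ e₁ e₂ y) (stereoDir ξ e₁ e₂ u y) := by
    have h1 := hP.continuous.continuousAt.eventually (hC.eventually (by simp))
    filter_upwards [h1] with y hy
    obtain ⟨L', hL', hLu'⟩ := exists_hasFDerivAt_stereo ξ e₁ e₂ y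
    have := (hy.differentiableAt (by norm_num)).hasFDerivAt.comp y hL'
    rw [this.fderiv]
    simp [hLu']
  have hA := (hd.hasFDerivAt.clm_apply (hasFDerivAt_const u z)).congr_of_eventuallyEq hev.symm
  have hB := (hdV.hasFDerivAt.comp z hL).clm_apply hM
  have h3 := congrArg (fun L : ℂ →L[ℝ] ℝ => L u) (hA.unique hB)
  simp [hLu, hMw] at h3
  rw [h3]
  ring

/-- Stereographic projection is conformal, so in dimension two it pulls harmonic functions back to
harmonic functions. -/
lemma laplacian_comp_stereo {V : E3 → ℝ} (hh : ∀ (t : ℝ) (x : E3), 0 < t → V (t • x) = V x)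
    {ξ e₁ e₂ : E3} (hξ : ‖ξ‖ = 1) (h1 : ‖e₁‖ = 1) (h2 : ‖e₂‖ = 1)
    (h12 : ⟪e₁, e₂⟫ = 0) (hξ1 : ⟪ξ, e₁⟫ = 0) (hξ2 : ⟪ξ, e₂⟫ = 0) (z : ℂ)
    (hC : ContDiffAt ℝ 2 V (stereo ξ e₁ e₂ z)) (hlap : lap V (stereo ξ e₁ e₂ z) = 0) :
    Laplacian.laplacian (V ∘ stereo ξ e₁ e₂) z = 0 := by
  rw [InnerProductSpace.laplacian_eq_iteratedFDeriv_complexPlane]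
  simp only [iteratedFDeriv_two_apply, Matrix.cons_val_zero, Matrix.cons_val_one]
  rw [fderiv_fderiv_comp_stereo ξ e₁ e₂ z hC, fderiv_fderiv_comp_stereo ξ e₁ e₂ z hC]
  have hnorm := norm_stereo hξ h1 h2 h12 hξ1 hξ2 z
  have hBs := fderiv_fderiv_self hh hC
  have hDs := fderiv_self_eq_zero hh (hC.differentiableAt (by norm_num))
  have hsymm : ∀ v w, fderiv ℝ (fderiv ℝ V) (stereo ξ e₁ e₂ z) v w =
      fderiv ℝ (fderiv ℝ V) (stereo ξ e₁ e₂ z) w v :=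
    fun v w => (hC.isSymmSndFDerivAt (by simp)) v w
  have htan := fun v w => lap_eq_tangential hh (x := stereo ξ e₁ e₂ z) (v := v) (w := w)
    (norm_pos_iff.1 (by rw [hnorm]; positivity)) hC
  set p := stereo ξ e₁ e₂ z with hp
  set D := fderiv ℝ V p
  set B := fderiv ℝ (fderiv ℝ V) p
  set a := z.re with ha
  set b := z.im with hb
  set n := 1 + (a ^ 2 + b ^ 2) with hn
  have hn0 : n ≠ 0 := by positivity
  set q₁ := stereoDir ξ e₁ e₂ 1 z with hq₁
  set q₂ := stereoDir ξ e₁ e₂ Complex.I z with hq₂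
  have hpe : p = (1 - (a ^ 2 + b ^ 2)) • ξ + (2 * a) • e₁ + (2 * b) • e₂ := rfl
  have hq₁e : q₁ = (-(2 * a)) • ξ + (2 : ℝ) • e₁ + (0 : ℝ) • e₂ := by
    simp [hq₁, stereoDir, ← ha]
  have hq₂e : q₂ = (-(2 * b)) • ξ + (0 : ℝ) • e₁ + (2 : ℝ) • e₂ := by
    simp [hq₂, stereoDir, ← hb]
  -- the tangential parts of the coordinate directions, normalised
  set t₁ : E3 := (1 / 2 : ℝ) • (q₁ - (2 * a / n) • p) with ht₁
  set t₂ : E3 := (1 / 2 : ℝ) • (q₂ - (2 * b / n) • p) with ht₂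
  have hI := inner_comb hξ h1 h2 h12 hξ1 hξ2
  have hpp : ⟪p, p⟫ = n ^ 2 := by rw [hpe, hI]; ring
  have hpq₁ : ⟪p, q₁⟫ = 2 * a * n := by rw [hpe, hq₁e, hI]; ring
  have hpq₂ : ⟪p, q₂⟫ = 2 * b * n := by rw [hpe, hq₂e, hI]; ring
  have hqq₁ : ⟪q₁, q₁⟫ = 4 * a ^ 2 + 4 := by rw [hq₁e, hI]; ring
  have hqq₂ : ⟪q₂, q₂⟫ = 4 * b ^ 2 + 4 := by rw [hq₂e, hI]; ring
  have hqq : ⟪q₁, q₂⟫ = 4 * a * b := by rw [hq₁e, hq₂e, hI]; ring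
  have hqp₁ := (real_inner_comm p q₁).trans hpq₁
  have hqp₂ := (real_inner_comm p q₂).trans hpq₂
  have hunit : ∀ t : E3, ⟪t, t⟫ = 1 → ‖t‖ = 1 := fun t ht => by
    rw [real_inner_self_eq_norm_sq] at ht
    exact (pow_eq_one_iff_of_nonneg (norm_nonneg _) two_ne_zero).1 ht
  have key : B t₁ t₁ + B t₂ t₂ = 0 := by
    rw [← htan t₁ t₂ ?_ ?_ ?_ ?_ ?_, hlap]
    · refine hunit _ ?_
      simp only [ht₁, inner_sub_left, inner_sub_right, real_inner_smul_left,
        real_inner_smul_right, hpp, hqq₁, hpq₁, hqp₁]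
      field_simp; ring
    · refine hunit _ ?_
      simp only [ht₂, inner_sub_left, inner_sub_right, real_inner_smul_left,
        real_inner_smul_right, hpp, hqq₂, hpq₂, hqp₂]
      field_simp; ring
    · simp only [ht₁, ht₂, inner_sub_left, inner_sub_right, real_inner_smul_left,
        real_inner_smul_right, hpp, hqq, hpq₂, hqp₁]
      field_simp; ring
    · simp only [ht₁, inner_sub_right, real_inner_smul_right, hpp, hpq₁]
      field_simp; ring
    · simp only [ht₂, inner_sub_right, real_inner_smul_right, hpp, hpq₂]
      field_simp; ring
  have hBp : ∀ v, B p v = - D v := fun v => by rw [hsymm, hBs]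
  simp only [ht₁, ht₂, map_smul, map_sub, _root_.smul_apply,
    _root_.sub_apply, smul_eq_mul, hBs, hBp, hDs] at key
  have hξe : D ξ = -(1 / n) * (a * D q₁ + b * D q₂) := by
    have : n • ξ = p - (a • q₁ + b • q₂) := by
      rw [hpe, hq₁e, hq₂e, hn]; module
    have h := congrArg D this
    simp only [map_smul, map_sub, map_add, smul_eq_mul, hDs] at h
    field_simp
    linarith
  rw [hξe]
  simp only [Complex.one_re, Complex.one_im, Complex.I_re, Complex.I_im]
  field_simp at key ⊢
  apply mul_left_cancel₀ hn0
  linear_combination key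

/-! ### Harmonic functions have the mean value property -/

theorem circle_mean_of_harmonic {Γ : Set E3}
    (hΓopen : IsOpen {p : Metric.sphere (0 : E3) 1 | (p : E3) ∈ Γ})
    {V : E3 → ℝ} (hh : ∀ (t : ℝ) (x : E3), 0 < t → V (t • x) = V x)
    (hC : ContDiffOn ℝ 2 V (cone Γ)) (hlap : ∀ x ∈ cone Γ, lap V x = 0)
    {ξ : E3} (hξ : ‖ξ‖ = 1) {ρ : ℝ} (hρ : 0 < ρ) (hρ2 : ρ < 2)
    (hcap : {η : E3 | η ∈ Metric.sphere (0 : E3) 1 ∧ 1 - ⟪ξ, η⟫ ≤ ρ} ⊆ Γ)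
    {e₁ e₂ : E3} (h1 : ‖e₁‖ = 1) (h2 : ‖e₂‖ = 1)
    (h12 : ⟪e₁, e₂⟫ = 0) (hξ1 : ⟪ξ, e₁⟫ = 0) (hξ2 : ⟪ξ, e₂⟫ = 0) :
    V ξ = (1 / (2 * π)) * ∫ θ in (0:ℝ)..(2 * π),
      V ((1 - ρ) • ξ + Real.sqrt (ρ * (2 - ρ)) • (Real.cos θ • e₁ + Real.sin θ • e₂)) := by
  have hopen := isOpen_cone hΓopen
  have hP := contDiff_stereo ξ e₁ e₂
  have h2ρ : 0 < 2 - ρ := by linarith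
  have hCat : ∀ x ∈ cone Γ, ContDiffAt ℝ 2 V x := fun x hx => hC.contDiffAt (hopen.mem_nhds hx)
  have hharm : ∀ z, stereo ξ e₁ e₂ z ∈ cone Γ →
      InnerProductSpace.HarmonicAt (V ∘ stereo ξ e₁ e₂) z := by
    intro z hz
    refine ⟨(hCat _ hz).comp z hP.contDiffAt, ?_⟩
    filter_upwards [hP.continuous.continuousAt.eventually (hopen.mem_nhds hz)] with y hy
    exact laplacian_comp_stereo hh hξ h1 h2 h12 hξ1 hξ2 y (hCat _ hy) (hlap _ hy)
  -- the radius of the disc that corresponds to the cap of radius `ρ`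
  set R := Real.sqrt (ρ / (2 - ρ)) with hR
  have hR0 : 0 < R := Real.sqrt_pos.2 (by positivity)
  have hRsq : R ^ 2 = ρ / (2 - ρ) := Real.sq_sqrt (by positivity)
  have hmem : ∀ z ∈ Metric.closedBall (0 : ℂ) |R|, stereo ξ e₁ e₂ z ∈ cone Γ := by
    intro z hz
    have hz' : z.re ^ 2 + z.im ^ 2 ≤ ρ / (2 - ρ) := by
      rw [mem_closedBall_zero_iff, abs_of_pos hR0] at hz
      have := pow_le_pow_left₀ (norm_nonneg z) hz 2
      rw [hRsq, Complex.sq_norm, Complex.normSq_apply] at this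
      nlinarith
    have hn := norm_stereo hξ h1 h2 h12 hξ1 hξ2 z
    have hn0 : stereo ξ e₁ e₂ z ≠ 0 := norm_pos_iff.1 (by rw [hn]; positivity)
    refine ⟨hn0, hcap ⟨by simp [norm_smul, hn0], ?_⟩⟩
    have hin : ⟪ξ, stereo ξ e₁ e₂ z⟫ = 1 - (z.re ^ 2 + z.im ^ 2) := by
      have := inner_comb hξ h1 h2 h12 hξ1 hξ2 1 0 0 (1 - (z.re ^ 2 + z.im ^ 2))
        (2 * z.re) (2 * z.im)
      simpa [stereo] using this
    rw [real_inner_smul_right, hin, hn]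
    set s := z.re ^ 2 + z.im ^ 2
    have hs : 0 ≤ s := by positivity
    rw [le_div_iff₀ h2ρ] at hz'
    rw [inv_mul_eq_div, sub_le_iff_le_add, ← sub_le_iff_le_add', le_div_iff₀ (by positivity)]
    nlinarith
  have havg := InnerProductSpace.HarmonicOnNhd.circleAverage_eq
    (f := V ∘ stereo ξ e₁ e₂) (c := 0) (R := R) fun z hz => hharm z (hmem z hz)
  have h0 : stereo ξ e₁ e₂ 0 = ξ := by simp [stereo]
  rw [Function.comp_apply, h0, Real.circleAverage_def] at havg
  rw [← havg, smul_eq_mul, one_div]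
  congr 1
  refine intervalIntegral.integral_congr fun θ _ => ?_
  simp only [Function.comp_apply]
  have hfac : stereo ξ e₁ e₂ (circleMap 0 R θ) = (2 / (2 - ρ)) •
      ((1 - ρ) • ξ + Real.sqrt (ρ * (2 - ρ)) • (Real.cos θ • e₁ + Real.sin θ • e₂)) := by
    have hre : (circleMap 0 R θ).re = R * Real.cos θ := by simp [circleMap, Complex.exp_re]
    have him : (circleMap 0 R θ).im = R * Real.sin θ := by simp [circleMap, Complex.exp_im]
    have hsqrt : Real.sqrt (ρ * (2 - ρ)) = R * (2 - ρ) := by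
      rw [Real.sqrt_eq_iff_mul_self_eq_of_pos (by positivity)]
      have : R * (2 - ρ) * (R * (2 - ρ)) = R ^ 2 * (2 - ρ) ^ 2 := by ring
      rw [this, hRsq]; field_simp
    have hss : (R * Real.cos θ) ^ 2 + (R * Real.sin θ) ^ 2 = ρ / (2 - ρ) := by
      rw [← hRsq]; linear_combination R ^ 2 * Real.cos_sq_add_sin_sq θ
    rw [stereo, hre, him, hss, hsqrt, add_assoc, smul_add, smul_add, smul_add, smul_smul,
      smul_smul, smul_smul, smul_smul, smul_smul]
    congr 2
    · field_simp; ring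
    · congr 1; field_simp
    · congr 1; field_simp
  rw [hfac, hh _ _ (by positivity)]


/-! ### From circle means to ball means -/

/-- The mean value property of the degree-zero homogeneous extension `V` over the circles that
bound closed caps contained in `Γ`. -/
def HasCircleMean (Γ : Set E3) (V : E3 → ℝ) : Prop :=
  ∀ ξ ∈ Γ, ∀ ρ : ℝ, 0 < ρ → ρ < 2 →
    {η : E3 | η ∈ Metric.sphere (0 : E3) 1 ∧ 1 - ⟪ξ, η⟫ ≤ ρ} ⊆ Γ →
    ∀ e₁ e₂ : E3, ‖e₁‖ = 1 → ‖e₂‖ = 1 → ⟪e₁, e₂⟫ = 0 → ⟪ξ, e₁⟫ = 0 → ⟪ξ, e₂⟫ = 0 →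
    V ξ = (1 / (2 * π)) * ∫ θ in (0:ℝ)..(2 * π),
      V ((1 - ρ) • ξ + Real.sqrt (ρ * (2 - ρ)) • (Real.cos θ • e₁ + Real.sin θ • e₂))

/-- Rotation by the angle `θ` about the axis `ξ`, in the orthonormal frame `ξ, e₁, e₂`. -/
def rot (ξ e₁ e₂ : E3) (θ : ℝ) (y : E3) : E3 :=
  ⟪ξ, y⟫ • ξ + (⟪e₁, y⟫ * Real.cos θ - ⟪e₂, y⟫ * Real.sin θ) • e₁ +
    (⟪e₁, y⟫ * Real.sin θ + ⟪e₂, y⟫ * Real.cos θ) • e₂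

lemma continuous_rot (ξ e₁ e₂ : E3) :
    Continuous fun q : ℝ × E3 => rot ξ e₁ e₂ q.1 q.2 := by
  unfold rot; fun_prop

section Frame

variable {ξ e₁ e₂ : E3} (hξ : ‖ξ‖ = 1) (h1 : ‖e₁‖ = 1) (h2 : ‖e₂‖ = 1)
    (h12 : ⟪e₁, e₂⟫ = 0) (hξ1 : ⟪ξ, e₁⟫ = 0) (hξ2 : ⟪ξ, e₂⟫ = 0)

include hξ h1 h2 h12 hξ1 hξ2

lemma frame_expand (y : E3) : y = ⟪ξ, y⟫ • ξ + ⟪e₁, y⟫ • e₁ + ⟪e₂, y⟫ • e₂ := by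
  obtain ⟨b, b0, b1, b2⟩ := exists_onb_of_triple hξ h1 h2 hξ1 hξ2 h12
  have := b.sum_repr' y
  rw [Fin.sum_univ_three, b0, b1, b2] at this
  exact this.symm

lemma exists_rot (θ : ℝ) : ∃ A : E3 ≃ₗᵢ[ℝ] E3, ∀ y, A y = rot ξ e₁ e₂ θ y := by
  have hI := inner_comb hξ h1 h2 h12 hξ1 hξ2
  have hN := norm_comb_sq hξ h1 h2 h12 hξ1 hξ2
  obtain ⟨b, b0, b1, b2⟩ := exists_onb_of_triple hξ h1 h2 hξ1 hξ2 h12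
  have hunit : ∀ t : E3, ‖t‖ ^ 2 = 1 → ‖t‖ = 1 := fun t ht =>
    (pow_eq_one_iff_of_nonneg (norm_nonneg _) two_ne_zero).1 ht
  have hcs := Real.cos_sq_add_sin_sq θ
  obtain ⟨b', b0', b1', b2'⟩ := exists_onb_of_triple
    (u := (1 : ℝ) • ξ + (0 : ℝ) • e₁ + (0 : ℝ) • e₂)
    (v := (0 : ℝ) • ξ + Real.cos θ • e₁ + Real.sin θ • e₂)
    (w := (0 : ℝ) • ξ + (-Real.sin θ) • e₁ + Real.cos θ • e₂)
    (hunit _ (by rw [hN]; norm_num)) (hunit _ (by rw [hN]; linear_combination hcs))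
    (hunit _ (by rw [hN]; linear_combination hcs)) (by rw [hI]; ring) (by rw [hI]; ring)
    (by rw [hI]; ring)
  refine ⟨b.equiv b' (Equiv.refl _), fun y => ?_⟩
  conv_lhs => rw [frame_expand hξ h1 h2 h12 hξ1 hξ2 y]
  have e0 : b.equiv b' (Equiv.refl _) ξ = b' 0 := by rw [← b0]; simp
  have e1 : b.equiv b' (Equiv.refl _) e₁ = b' 1 := by rw [← b1]; simp
  have e2 : b.equiv b' (Equiv.refl _) e₂ = b' 2 := by rw [← b2]; simp
  rw [map_add, map_add, map_smul, map_smul, map_smul, e0, e1, e2, b0', b1', b2', rot]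
  module

/-- The mean of `V` over the orbit of `y` under the rotations about the axis `ξ` is `V ξ`, as long
as `y` lies in a ball about a point of the axis contained in the cone: the orbit projects radially
to a circle that bounds a closed cap about `ξ`, and this cap is covered by the projection of the
ball. -/
lemma integral_rot {Γ : Set E3} {V : E3 → ℝ}
    (hh : ∀ (t : ℝ) (x : E3), 0 < t → V (t • x) = V x) (hM : HasCircleMean Γ V)
    {τ r : ℝ} (hτ : 0 < τ) (hball : Metric.closedBall (τ • ξ) r ⊆ cone Γ) {y : E3}
    (hy : y ∈ Metric.closedBall (τ • ξ) r) :
    ∫ θ in (0:ℝ)..(2 * π), V (rot ξ e₁ e₂ θ y) = 2 * π * V ξ := by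
  have hN := norm_comb_sq hξ h1 h2 h12 hξ1 hξ2
  have hI := inner_comb hξ h1 h2 h12 hξ1 hξ2
  have hye := frame_expand hξ h1 h2 h12 hξ1 hξ2 y
  unfold rot
  set a := ⟪ξ, y⟫
  set b := ⟪e₁, y⟫
  set c := ⟪e₂, y⟫
  have hyn : ‖y‖ ^ 2 = a ^ 2 + b ^ 2 + c ^ 2 := by
    conv_lhs => rw [hye]
    exact hN a b c
  have hyd : ‖y - τ • ξ‖ ^ 2 = ‖y‖ ^ 2 - 2 * τ * a + τ ^ 2 := by
    have : y - τ • ξ = (a - τ) • ξ + b • e₁ + c • e₂ := by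
      conv_lhs => rw [hye]
      module
    rw [this, hN, hyn]; ring
  have hyr : ‖y - τ • ξ‖ ≤ r := by simpa [dist_eq_norm] using hy
  have hr0 : 0 ≤ r := (norm_nonneg _).trans hyr
  have hrτ : r < τ := by
    by_contra! hcon
    have h0 : (0 : E3) ∈ Metric.closedBall (τ • ξ) r := by
      simpa [norm_smul, hξ, abs_of_pos hτ] using hcon
    exact (hball h0).1 rfl
  have ha : 0 < a := by
    have : ‖y - τ • ξ‖ ^ 2 < τ ^ 2 := by
      have := norm_nonneg (y - τ • ξ); nlinarith
    nlinarith [sq_nonneg ‖y‖]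
  set s := Real.sqrt (b ^ 2 + c ^ 2) with hs
  have hs2 : s ^ 2 = b ^ 2 + c ^ 2 := Real.sq_sqrt (by positivity)
  have hξΓ : ξ ∈ Γ := by
    refine mem_of_mem_cone hξ ((smul_mem_cone hτ).1 (hball (by simpa using hr0)))
  rcases (Real.sqrt_nonneg (b ^ 2 + c ^ 2)).eq_or_lt with hs0 | hs0
  · -- on the axis itself the orbit is a single point
    have hs0' : s = 0 := hs0.symm
    rw [hs0'] at hs2
    have hb : b = 0 := by nlinarith [sq_nonneg b, sq_nonneg c]
    have hc : c = 0 := by nlinarith [sq_nonneg b, sq_nonneg c]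
    simp [hb, hc, hh a ξ ha]
  · have hs0 : 0 < s := hs0
    have hyn' : ‖y‖ ^ 2 = a ^ 2 + s ^ 2 := by rw [hyn, hs2]; ring
    have hypos : 0 < ‖y‖ := by
      rcases (norm_nonneg y).eq_or_lt with h | h
      · rw [← h] at hyn'; nlinarith
      · exact h
    have hay : a < ‖y‖ := by nlinarith
    have hlt : a / ‖y‖ < 1 := (div_lt_one hypos).2 hay
    have hgt : 0 < a / ‖y‖ := by positivity
    have hcap : {η : E3 | η ∈ Metric.sphere (0 : E3) 1 ∧ 1 - ⟪ξ, η⟫ ≤ 1 - a / ‖y‖} ⊆ Γ := by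
      rintro η ⟨hη, hηle⟩
      have hη1 : ‖η‖ = 1 := by simpa using hη
      refine mem_of_mem_cone hη1 ((smul_mem_cone hypos).1 (hball ?_))
      have hge : a ≤ ‖y‖ * ⟪ξ, η⟫ := by
        have : a / ‖y‖ ≤ ⟪ξ, η⟫ := by linarith
        rw [div_le_iff₀ hypos] at this; linarith
      have : ‖‖y‖ • η - τ • ξ‖ ^ 2 ≤ r ^ 2 := by
        rw [norm_sub_sq_real, norm_smul, norm_smul, hη1, hξ, real_inner_smul_left,
          real_inner_smul_right, real_inner_comm, Real.norm_of_nonneg hypos.le,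
          Real.norm_of_nonneg hτ.le]
        have := pow_le_pow_left₀ (norm_nonneg _) hyr 2
        nlinarith
      rw [Metric.mem_closedBall, dist_eq_norm]
      exact (sq_le_sq₀ (norm_nonneg _) hr0).1 this
    -- the frame adapted to `y`: the orbit starts in the direction of the first vector
    set f₁ : E3 := (b / s) • e₁ + (c / s) • e₂ with hf₁
    set f₂ : E3 := (-(c / s)) • e₁ + (b / s) • e₂ with hf₂
    have hf₁' : f₁ = (0 : ℝ) • ξ + (b / s) • e₁ + (c / s) • e₂ := by rw [hf₁]; module
    have hf₂' : f₂ = (0 : ℝ) • ξ + (-(c / s)) • e₁ + (b / s) • e₂ := by rw [hf₂]; module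
    have hbc : (b / s) ^ 2 + (c / s) ^ 2 = 1 := by
      rw [div_pow, div_pow, ← add_div, hs2, div_self]; rw [← hs2]; positivity
    have hunit : ∀ t : E3, ‖t‖ ^ 2 = 1 → ‖t‖ = 1 := fun t ht =>
      (pow_eq_one_iff_of_nonneg (norm_nonneg _) two_ne_zero).1 ht
    have hm := hM ξ hξΓ (1 - a / ‖y‖) (by linarith) (by linarith) hcap f₁ f₂
      (hunit _ (by rw [hf₁', hN]; linear_combination hbc))
      (hunit _ (by rw [hf₂', hN]; linear_combination hbc))
      (by rw [hf₁', hf₂', hI]; ring)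
      (by rw [hf₁, inner_add_right, real_inner_smul_right, real_inner_smul_right, hξ1, hξ2]; ring)
      (by rw [hf₂, inner_add_right, real_inner_smul_right, real_inner_smul_right, hξ1, hξ2]; ring)
    have hsq : Real.sqrt ((1 - a / ‖y‖) * (2 - (1 - a / ‖y‖))) = s / ‖y‖ := by
      rw [Real.sqrt_eq_iff_mul_self_eq_of_pos (by positivity)]
      field_simp
      linear_combination - hyn'
    rw [hsq] at hm
    rw [hm]
    field_simp
    refine intervalIntegral.integral_congr fun θ _ => ?_
    refine Eq.trans ?_ (hh ‖y‖ _ hypos)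
    congr 1
    rw [hf₁, hf₂, ← sub_eq_zero]
    match_scalars <;> field_simp <;> ring

end Frame

/-- A smooth radial kernel, positive exactly on the open ball of radius `r`. -/
def ker (r : ℝ) (y : E3) : ℝ := Real.smoothTransition (r ^ 2 - ‖y‖ ^ 2)

lemma contDiff_ker (r : ℝ) : ContDiff ℝ 2 (ker r) := by
  have h1 : ContDiff ℝ 2 (fun y : E3 => r ^ 2 - ‖y‖ ^ 2) := contDiff_const.sub (contDiff_norm_sq ℝ)
  exact (Real.smoothTransition.contDiff (n := 2)).comp h1

lemma ker_eq_zero {r : ℝ} (hr : 0 < r) {y : E3} (hy : r ≤ ‖y‖) : ker r y = 0 := by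
  refine Real.smoothTransition.zero_of_nonpos ?_
  have := pow_le_pow_left₀ hr.le hy 2
  linarith

lemma hasCompactSupport_ker {r : ℝ} (hr : 0 < r) : HasCompactSupport (ker r) := by
  refine HasCompactSupport.intro (isCompact_closedBall (0 : E3) r) fun y hy => ?_
  rw [mem_closedBall_zero_iff, not_le] at hy
  exact ker_eq_zero hr hy.le

lemma integral_ker_pos {r : ℝ} (hr : 0 < r) : 0 < ∫ y, ker r y := by
  refine (contDiff_ker r).continuous.integral_pos_of_hasCompactSupport_nonneg_nonzero (x := 0)
    (hasCompactSupport_ker hr) (fun y => Real.smoothTransition.nonneg _) ?_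
  exact (Real.smoothTransition.pos_of_pos (by simpa using by positivity)).ne'

/-- Averaging over rotations about the axis through `x` turns the circle means into a weighted
ball mean with a smooth radial weight. -/
lemma integral_ker_mul {Γ : Set E3} (hopen : IsOpen (cone Γ)) {V : E3 → ℝ}
    (hV : ContinuousOn V (cone Γ))
    (hh : ∀ (t : ℝ) (x : E3), 0 < t → V (t • x) = V x) (hM : HasCircleMean Γ V)
    {x : E3} {r : ℝ} (hr : 0 < r) (hball : Metric.closedBall x r ⊆ cone Γ) :
    ∫ y, ker r (x - y) * V y = (∫ y, ker r y) * V x := by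
  have hx : x ∈ cone Γ := hball (by simpa using hr.le)
  set τ := ‖x‖ with hτ
  have hτ0 : 0 < τ := norm_pos_iff.2 hx.1
  set ξ := τ⁻¹ • x with hξdef
  have hxe : x = τ • ξ := by rw [hξdef, smul_inv_smul₀ hτ0.ne']
  have hξ : ‖ξ‖ = 1 := by rw [hξdef, norm_smul, norm_inv, ← hτ, Real.norm_of_nonneg hτ0.le, inv_mul_cancel₀ hτ0.ne']
  have hVx : V x = V ξ := by rw [hxe, hh _ _ hτ0]
  obtain ⟨e₁, e₂, h1, h2, h12, hξ1, hξ2⟩ := exists_frame hξ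
  set W : E3 → ℝ := fun y => ker r (x - y) * V y with hW
  have hWzero : ∀ y, y ∉ Metric.closedBall x r → W y = 0 := by
    intro y hy
    rw [Metric.mem_closedBall, not_le, dist_comm, dist_eq_norm] at hy
    simp [hW, ker_eq_zero hr hy.le]
  have hWc : Continuous W := by
    rw [continuous_iff_continuousAt]
    intro y
    by_cases hy : y ∈ Metric.closedBall x r
    · refine ContinuousAt.mul ?_ (hV.continuousAt (hopen.mem_nhds (hball hy)))
      exact ((contDiff_ker r).continuous.comp (continuous_const.sub continuous_id)).continuousAt
    · refine (continuousAt_const (y := (0 : ℝ))).congr ?_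
      filter_upwards [Metric.isClosed_closedBall.isOpen_compl.mem_nhds hy] with z hz
      exact (hWzero z hz).symm
  have hdist : ∀ θ y, ‖x - rot ξ e₁ e₂ θ y‖ = ‖x - y‖ := by
    intro θ y
    obtain ⟨A, hA⟩ := exists_rot hξ h1 h2 h12 hξ1 hξ2 θ
    have hAx : A x = x := by
      rw [hA, hxe]
      have h1ξ := (real_inner_comm ξ e₁).trans hξ1
      have h2ξ := (real_inner_comm ξ e₂).trans hξ2
      simp [rot, real_inner_smul_right, h1ξ, h2ξ, hξ]
    rw [← hA]
    nth_rewrite 1 [← hAx]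
    rw [← map_sub, A.norm_map]
  have hrotW : ∀ θ, ∫ y, W (rot ξ e₁ e₂ θ y) = ∫ y, W y := by
    intro θ
    obtain ⟨A, hA⟩ := exists_rot hξ h1 h2 h12 hξ1 hξ2 θ
    simp_rw [← hA]
    exact A.measurePreserving.integral_comp A.toHomeomorph.measurableEmbedding W
  have hFc : Continuous fun q : ℝ × E3 => W (rot ξ e₁ e₂ q.1 q.2) :=
    hWc.comp (continuous_rot ξ e₁ e₂)
  have hWint : Integrable (Function.uncurry fun θ y => W (rot ξ e₁ e₂ θ y))
      ((volume.restrict (Set.Ioc 0 (2 * π))).prod (volume : Measure E3)) := by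
    have hK : IntegrableOn (fun q : ℝ × E3 => W (rot ξ e₁ e₂ q.1 q.2))
        (Set.Icc 0 (2 * π) ×ˢ Metric.closedBall x r) (volume.prod volume) :=
      hFc.continuousOn.integrableOn_compact (isCompact_Icc.prod (isCompact_closedBall x r))
    have hK' := hK.of_forall_sdiff_eq_zero (t := Set.Ioc 0 (2 * π) ×ˢ Set.univ)
      (measurableSet_Ioc.prod MeasurableSet.univ) (by
        rintro ⟨θ, y⟩ ⟨⟨hθ, -⟩, hn⟩
        refine hWzero _ fun hmem => hn ⟨Set.Ioc_subset_Icc_self hθ, ?_⟩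
        rw [Metric.mem_closedBall, dist_comm, dist_eq_norm] at hmem ⊢
        rwa [hdist] at hmem)
    rw [IntegrableOn, ← Measure.prod_restrict, Measure.restrict_univ] at hK'
    exact hK'
  have hswap := integral_integral_swap hWint
  simp_rw [hrotW] at hswap
  have hinner : ∀ y, ∫ θ in Set.Ioc 0 (2 * π), W (rot ξ e₁ e₂ θ y) =
      ker r (x - y) * (2 * π * V ξ) := by
    intro y
    rw [← intervalIntegral.integral_of_le (by positivity)]
    simp only [hW, ker, hdist]
    rw [intervalIntegral.integral_const_mul]
    by_cases hy : y ∈ Metric.closedBall x r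
    · congr 1
      rw [hxe] at hy hball
      exact integral_rot hξ h1 h2 h12 hξ1 hξ2 hh hM hτ0 hball hy
    · rw [Metric.mem_closedBall, not_le, dist_comm, dist_eq_norm] at hy
      have := ker_eq_zero hr hy.le
      rw [ker] at this
      simp [this]
  simp_rw [hinner] at hswap
  rw [MeasureTheory.integral_mul_const, integral_sub_left_eq_self, MeasureTheory.integral_const, smul_eq_mul] at hswap
  simp only [measureReal_restrict_apply_univ, Real.volume_real_Ioc, sub_zero] at hswap
  rw [max_eq_left (by positivity)] at hswap
  rw [hVx]
  have hpi : 2 * π ≠ 0 := by positivity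
  apply mul_left_cancel₀ hpi
  rw [hswap]; ring

/-! ### Regularity, and vanishing of the Laplacian -/

/-- Near each point of the cone, `V` is a constant multiple of its convolution with a smooth
kernel. -/
lemma contDiffAt_of_hasCircleMean {Γ : Set E3} (hopen : IsOpen (cone Γ)) {V : E3 → ℝ}
    (hV : ContinuousOn V (cone Γ))
    (hh : ∀ (t : ℝ) (x : E3), 0 < t → V (t • x) = V x) (hM : HasCircleMean Γ V)
    {x₀ : E3} (hx₀ : x₀ ∈ cone Γ) : ContDiffAt ℝ 2 V x₀ := by
  obtain ⟨R, hR, hRsub⟩ := Metric.nhds_basis_closedBall.mem_iff.1 (hopen.mem_nhds hx₀)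
  set r := R / 2 with hr
  have hr0 : 0 < r := by positivity
  set G : E3 → ℝ := (Metric.closedBall x₀ R).indicator V with hG
  have hGi : Integrable G := by
    rw [hG, integrable_indicator_iff Metric.isClosed_closedBall.measurableSet]
    exact (hV.mono hRsub).integrableOn_compact (isCompact_closedBall x₀ R)
  have hconv := (hasCompactSupport_ker hr0).contDiff_convolution_left (𝕜 := ℝ) (μ := volume)
    (ContinuousLinearMap.mul ℝ ℝ) (n := 2) (contDiff_ker r) hGi.locallyIntegrable
  have hc := integral_ker_pos hr0
  refine (contDiff_const (c := (∫ y, ker r y)⁻¹)).mul hconv |>.contDiffAt.congr_of_eventuallyEq ?_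
  filter_upwards [Metric.ball_mem_nhds x₀ hr0] with x hx
  have hsub : Metric.closedBall x r ⊆ Metric.closedBall x₀ R := by
    refine Metric.closedBall_subset_closedBall' ?_
    have : dist x x₀ < r := hx
    linarith
  have hm := integral_ker_mul hopen hV hh hM hr0 (hsub.trans hRsub)
  have hce : convolution (ker r) G (ContinuousLinearMap.mul ℝ ℝ) volume x =
      ∫ y, ker r (x - y) * V y := by
    rw [convolution_eq_swap]
    refine integral_congr_ae (Filter.Eventually.of_forall fun y => ?_)
    by_cases hy : y ∈ Metric.closedBall x r
    · simp [hG, hsub hy]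
    · rw [Metric.mem_closedBall, not_le, dist_comm, dist_eq_norm] at hy
      simp [ker_eq_zero hr0 hy.le]
  rw [hce, hm]
  field_simp

/-- Second-order Taylor expansion with Peano remainder. -/
lemma taylor_two {V : E3 → ℝ} {x : E3} (hC : ContDiffAt ℝ 2 V x) {ε : ℝ} (hε : 0 < ε) :
    ∃ δ > 0, ∀ h : E3, ‖h‖ < δ →
      |V (x + h) - V x - fderiv ℝ V x h - fderiv ℝ (fderiv ℝ V) x h h / 2| ≤ ε * ‖h‖ ^ 2 := by
  have hd : DifferentiableAt ℝ (fderiv ℝ V) x :=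
    (hC.fderiv_right (m := 1) (by norm_num)).differentiableAt (by norm_num)
  have hsymm : ∀ v w, fderiv ℝ (fderiv ℝ V) x v w = fderiv ℝ (fderiv ℝ V) x w v :=
    fun v w => (hC.isSymmSndFDerivAt (by simp)) v w
  have hlo := hd.hasFDerivAt.isLittleO.def hε
  have hev := hlo.and ((hC.eventually (by simp)).mono
    fun y (hy : ContDiffAt ℝ 2 V y) => hy.differentiableAt (by norm_num))
  obtain ⟨δ, hδ, hball⟩ := Metric.eventually_nhds_iff.1 hev
  refine ⟨δ, hδ, fun h hh => ?_⟩
  set D := fderiv ℝ V x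
  set B := fderiv ℝ (fderiv ℝ V) x
  have hin : ∀ k ∈ Metric.closedBall (0 : E3) ‖h‖, dist (x + k) x < δ := by
    intro k hk
    rw [mem_closedBall_zero_iff] at hk
    simpa using hk.trans_lt hh
  have hder : ∀ k ∈ Metric.closedBall (0 : E3) ‖h‖,
      HasFDerivWithinAt (fun k => V (x + k) - D k - B k k / 2) (fderiv ℝ V (x + k) - D - B k)
        (Metric.closedBall (0 : E3) ‖h‖) k := by
    intro k hk
    refine HasFDerivAt.hasFDerivWithinAt ?_
    have hv : HasFDerivAt (fun k => V (x + k)) (fderiv ℝ V (x + k)) k := by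
      have := (hball (hin k hk)).2.hasFDerivAt
      exact (hasFDerivAt_comp_add_left x).2 this
    have hB : HasFDerivAt (fun k => B k k) _ k := B.hasFDerivAt.clm_apply (hasFDerivAt_id k)
    have hall := (hv.sub D.hasFDerivAt).sub (hB.mul_const (1 / 2 : ℝ))
    refine (hall.congr_fderiv ?_).congr_of_eventuallyEq ?_
    · ext v
      simp [hsymm v k]
      ring
    · filter_upwards with k
      simp
      ring
  have hbd : ∀ k ∈ Metric.closedBall (0 : E3) ‖h‖, ‖fderiv ℝ V (x + k) - D - B k‖ ≤ ε * ‖h‖ := by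
    intro k hk
    have h1 := (hball (hin k hk)).1
    simp only [add_sub_cancel_left] at h1
    rw [mem_closedBall_zero_iff] at hk
    exact h1.trans (by gcongr)
  have hmain := (convex_closedBall (0 : E3) ‖h‖).norm_image_sub_le_of_norm_hasFDerivWithin_le
    hder hbd (x := 0) (y := h) (by simp) (by simp)
  simp only [add_zero, map_zero, sub_zero, zero_div, Real.norm_eq_abs] at hmain
  refine le_trans (le_of_eq ?_) (hmain.trans (le_of_eq (by ring)))
  congr 1; ring

/-- Comparing the Taylor expansion of `V` in the tangential directions with the means over small
circles about the axis through `x`. -/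
lemma lap_eq_zero_of_hasCircleMean {Γ : Set E3} (hopen : IsOpen (cone Γ)) {V : E3 → ℝ}
    (hV : ContinuousOn V (cone Γ))
    (hh : ∀ (t : ℝ) (x : E3), 0 < t → V (t • x) = V x) (hM : HasCircleMean Γ V)
    {x : E3} (hx : x ∈ cone Γ) : lap V x = 0 := by
  have hC := contDiffAt_of_hasCircleMean hopen hV hh hM hx
  obtain ⟨r, hr, hball⟩ := Metric.nhds_basis_closedBall.mem_iff.1 (hopen.mem_nhds hx)
  set τ := ‖x‖ with hτ
  have hτ0 : 0 < τ := norm_pos_iff.2 hx.1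
  set ξ := τ⁻¹ • x with hξdef
  have hxe : x = τ • ξ := by rw [hξdef, smul_inv_smul₀ hτ0.ne']
  have hξ : ‖ξ‖ = 1 := by rw [hξdef, norm_smul, norm_inv, ← hτ, Real.norm_of_nonneg hτ0.le, inv_mul_cancel₀ hτ0.ne']
  have hVx : V x = V ξ := by rw [hxe, hh _ _ hτ0]
  obtain ⟨e₁, e₂, h1, h2, h12, hξ1, hξ2⟩ := exists_frame hξ
  rw [lap_eq_tangential hh hx.1 hC h1 h2 h12 (by rw [hxe, real_inner_smul_left, hξ1, mul_zero])
    (by rw [hxe, real_inner_smul_left, hξ2, mul_zero])]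
  set D := fderiv ℝ V x
  set B := fderiv ℝ (fderiv ℝ V) x
  have hwn : ∀ θ : ℝ, ‖Real.cos θ • e₁ + Real.sin θ • e₂‖ = 1 := by
    intro θ
    have := norm_comb_sq hξ h1 h2 h12 hξ1 hξ2 0 (Real.cos θ) (Real.sin θ)
    rw [zero_smul, zero_add] at this
    refine (pow_eq_one_iff_of_nonneg (norm_nonneg _) two_ne_zero).1 (this.trans ?_)
    linear_combination Real.cos_sq_add_sin_sq θ
  have hsmall : ∀ ε > 0, |B e₁ e₁ + B e₂ e₂| ≤ 4 * ε := by
    intro ε hε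
    obtain ⟨δ, hδ, hT⟩ := taylor_two hC hε
    obtain ⟨s, hs0, hs⟩ := exists_between (lt_min hr hδ)
    have hsr : s ≤ r := (hs.trans_le (min_le_left _ _)).le
    have hsδ : s < δ := hs.trans_le (min_le_right _ _)
    set w : ℝ → E3 := fun θ => Real.cos θ • e₁ + Real.sin θ • e₂ with hw
    have hwc : Continuous w := by fun_prop
    have hns : ∀ θ, ‖s • w θ‖ = s := fun θ => by
      rw [norm_smul, hwn, mul_one, Real.norm_of_nonneg hs0.le]
    have hmean : ∫ θ in (0:ℝ)..(2 * π), V (x + s • w θ) = 2 * π * V x := by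
      have hy : x + s • e₁ ∈ Metric.closedBall x r := by
        simp [norm_smul, h1, abs_of_pos hs0, hsr]
      rw [hVx]
      have hb := hball
      rw [hxe] at hb
      rw [← integral_rot hξ h1 h2 h12 hξ1 hξ2 hh hM hτ0 hb (y := x + s • e₁) (by rwa [← hxe])]
      refine intervalIntegral.integral_congr fun θ _ => ?_
      have h1ξ := (real_inner_comm ξ e₁).trans hξ1
      have h2ξ := (real_inner_comm ξ e₂).trans hξ2
      have h21 := (real_inner_comm e₁ e₂).trans h12
      congr 1
      rw [hxe, rot]
      simp only [inner_add_right, real_inner_smul_right, hξ1, h1ξ, h2ξ, h21,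
        real_inner_self_eq_norm_sq, hξ, h1, hw]
      module
    have hVc : Continuous fun θ => V (x + s • w θ) := by
      rw [continuous_iff_continuousAt]
      intro θ
      have hin : x + s • w θ ∈ cone Γ := by
        refine hball ?_
        rw [Metric.mem_closedBall, dist_eq_norm, add_sub_cancel_left, hns]; exact hsr
      exact (hV.continuousAt (hopen.mem_nhds hin)).comp
        (f := fun θ => x + s • w θ) (by fun_prop)
    have hbound := intervalIntegral.norm_integral_le_of_norm_le_const (a := 0) (b := 2 * π)
      (f := fun θ => V (x + s • w θ) - V x - D (s • w θ) - B (s • w θ) (s • w θ) / 2)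
      (C := ε * s ^ 2) (fun θ _ => by
        have := hT (s • w θ) (by rw [hns]; exact hsδ)
        rwa [hns] at this)
    have hD : ∫ θ in (0:ℝ)..(2 * π), D (s • w θ) = 0 := by
      simp only [hw, map_smul, map_add, smul_eq_mul]
      rw [intervalIntegral.integral_const_mul, intervalIntegral.integral_add
        (by apply Continuous.intervalIntegrable; fun_prop)
        (by apply Continuous.intervalIntegrable; fun_prop),
        intervalIntegral.integral_mul_const, intervalIntegral.integral_mul_const]
      simp
    have hB : ∫ θ in (0:ℝ)..(2 * π), B (s • w θ) (s • w θ) / 2 =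
        s ^ 2 * π / 2 * (B e₁ e₁ + B e₂ e₂) := by
      have : ∀ θ, B (s • w θ) (s • w θ) / 2 = Real.cos θ ^ 2 * (s ^ 2 / 2 * B e₁ e₁) +
          Real.sin θ * Real.cos θ * (s ^ 2 / 2 * (B e₁ e₂ + B e₂ e₁)) +
          Real.sin θ ^ 2 * (s ^ 2 / 2 * B e₂ e₂) := by
        intro θ
        simp [hw]
        ring
      simp_rw [this]
      rw [intervalIntegral.integral_add
        (by apply Continuous.intervalIntegrable; fun_prop)
        (by apply Continuous.intervalIntegrable; fun_prop), intervalIntegral.integral_add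
        (by apply Continuous.intervalIntegrable; fun_prop)
        (by apply Continuous.intervalIntegrable; fun_prop),
        intervalIntegral.integral_mul_const, intervalIntegral.integral_mul_const,
        intervalIntegral.integral_mul_const, integral_cos_sq, integral_sin_sq,
        integral_sin_mul_cos₁]
      simp
      ring
    have hBc : Continuous fun θ => B (s • w θ) (s • w θ) / 2 := by fun_prop
    have hDc : Continuous fun θ => D (s • w θ) := by fun_prop
    have hV1 : Continuous fun θ => V (x + s • w θ) - V x := hVc.sub continuous_const
    have hV2 : Continuous fun θ => V (x + s • w θ) - V x - D (s • w θ) := hV1.sub hDc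
    rw [intervalIntegral.integral_sub (hV2.intervalIntegrable _ _) (hBc.intervalIntegrable _ _),
      intervalIntegral.integral_sub (hV1.intervalIntegrable _ _) (hDc.intervalIntegrable _ _),
      intervalIntegral.integral_sub (hVc.intervalIntegrable _ _)
      (continuous_const.intervalIntegrable _ _), hmean, hD, hB, intervalIntegral.integral_const,
      smul_eq_mul, sub_zero, sub_zero, sub_self, zero_sub, norm_neg, Real.norm_eq_abs, abs_mul,
      abs_of_pos (by positivity : 0 < s ^ 2 * π / 2), abs_of_pos (by positivity : 0 < 2 * π)]
      at hbound
    have hpos : 0 < s ^ 2 * π / 2 := by positivity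
    refine le_of_mul_le_mul_left (hbound.trans (le_of_eq ?_)) hpos
    ring
  have h0 : |B e₁ e₁ + B e₂ e₂| ≤ 0 := by
    refine le_of_forall_pos_le_add fun ε hε => ?_
    have := hsmall (ε / 4) (by positivity)
    linarith
  exact abs_nonpos_iff.1 h0


/-- Mean Value Property II. -/
theorem mean_value_property_II (Γ : Set E3) (hΓsub : Γ ⊆ Metric.sphere (0 : E3) 1)
    (hΓopen : IsOpen {p : Metric.sphere (0 : E3) 1 | (p : E3) ∈ Γ})
    (U : E3 → ℝ) (hU : ContinuousOn U Γ)
    (V : E3 → ℝ) (hV : ∀ x : E3, V x = U (‖x‖⁻¹ • x)) :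
    (ContDiffOn ℝ 2 V (cone Γ) ∧ ∀ x ∈ cone Γ, lap V x = 0) ↔
      (∀ ξ ∈ Γ, ∀ ρ : ℝ, 0 < ρ → ρ < 2 →
        {η : E3 | η ∈ Metric.sphere (0 : E3) 1 ∧ 1 - ⟪ξ, η⟫ ≤ ρ} ⊆ Γ →
        ∀ e₁ e₂ : E3, ‖e₁‖ = 1 → ‖e₂‖ = 1 → ⟪e₁, e₂⟫ = 0 → ⟪ξ, e₁⟫ = 0 → ⟪ξ, e₂⟫ = 0 →
        U ξ = (1 / (2 * π)) * ∫ θ in (0:ℝ)..(2 * π),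
            U ((1 - ρ) • ξ + Real.sqrt (ρ * (2 - ρ)) •
              (Real.cos θ • e₁ + Real.sin θ • e₂))) := by
  have hh : ∀ (t : ℝ) (x : E3), 0 < t → V (t • x) = V x := by
    intro t x ht
    rw [hV, hV, norm_smul, smul_smul, Real.norm_of_nonneg ht.le, mul_inv]
    congr 2; field_simp
  have hVU : ∀ x : E3, ‖x‖ = 1 → V x = U x := fun x hx => by rw [hV, hx, inv_one, one_smul]
  have hopen := isOpen_cone hΓopen
  have hΓ1 : ∀ ξ ∈ Γ, ‖ξ‖ = 1 := fun ξ hξ => by simpa using hΓsub hξ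
  have hVc : ContinuousOn V (cone Γ) := by
    have : V = fun x => U (‖x‖⁻¹ • x) := funext hV
    rw [this]
    refine hU.comp (fun x hx => ?_) fun x hx => hx.2
    refine ContinuousAt.continuousWithinAt ?_
    exact (continuous_norm.continuousAt.inv₀ (norm_ne_zero_iff.2 hx.1)).smul continuousAt_id
  -- the circles lie on the sphere, where `U` and `V` agree
  have hcirc : ∀ ξ e₁ e₂ : E3, ‖ξ‖ = 1 → ‖e₁‖ = 1 → ‖e₂‖ = 1 → ⟪e₁, e₂⟫ = 0 → ⟪ξ, e₁⟫ = 0 →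
      ⟪ξ, e₂⟫ = 0 → ∀ ρ : ℝ, 0 < ρ → ρ < 2 → ∀ θ : ℝ,
      V ((1 - ρ) • ξ + Real.sqrt (ρ * (2 - ρ)) • (Real.cos θ • e₁ + Real.sin θ • e₂)) =
      U ((1 - ρ) • ξ + Real.sqrt (ρ * (2 - ρ)) • (Real.cos θ • e₁ + Real.sin θ • e₂)) := by
    intro ξ e₁ e₂ hξ h1 h2 h12 hξ1 hξ2 ρ hρ hρ2 θ
    refine hVU _ ((pow_eq_one_iff_of_nonneg (norm_nonneg _) two_ne_zero).1 ?_)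
    rw [smul_add, smul_smul, smul_smul, ← add_assoc, norm_comb_sq hξ h1 h2 h12 hξ1 hξ2]
    have hsq : Real.sqrt (ρ * (2 - ρ)) ^ 2 = ρ * (2 - ρ) :=
      Real.sq_sqrt (mul_nonneg hρ.le (by linarith))
    linear_combination Real.sqrt (ρ * (2 - ρ)) ^ 2 * Real.cos_sq_add_sin_sq θ + hsq
  constructor
  · rintro ⟨hC, hlap⟩ ξ hξ ρ hρ hρ2 hcap e₁ e₂ h1 h2 h12 hξ1 hξ2
    have hm := circle_mean_of_harmonic hΓopen hh hC hlap (hΓ1 ξ hξ) hρ hρ2 hcap h1 h2 h12 hξ1 hξ2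
    simp_rw [hcirc ξ e₁ e₂ (hΓ1 ξ hξ) h1 h2 h12 hξ1 hξ2 ρ hρ hρ2] at hm
    rw [← hVU ξ (hΓ1 ξ hξ)]
    exact hm
  · intro H
    have hM : HasCircleMean Γ V := by
      intro ξ hξ ρ hρ hρ2 hcap e₁ e₂ h1 h2 h12 hξ1 hξ2
      simp_rw [hcirc ξ e₁ e₂ (hΓ1 ξ hξ) h1 h2 h12 hξ1 hξ2 ρ hρ hρ2]
      rw [hVU ξ (hΓ1 ξ hξ)]
      exact H ξ hξ ρ hρ hρ2 hcap e₁ e₂ h1 h2 h12 hξ1 hξ2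
    exact ⟨fun x hx => (contDiffAt_of_hasCircleMean hopen hVc hh hM hx).contDiffWithinAt,
      fun x hx => lap_eq_zero_of_hasCircleMean hopen hVc hh hM hx⟩

end
end

section
/- Differentiability of the surface potential: Let Γ ⊆ S² be a Borel set and H : S² → ℝ continuous. Define u : ℝ³∖{0} → ℝ by u(x) = ∫_{η ∈ Γ} G((x/‖x‖)·η)·H(η) dσ(η). Then u is continuously differentiable on ℝ³∖{0} and, for every x ≠ 0, the Fréchet derivative of u at x equals ∫_{η ∈ Γ} D_x[ y ↦ G((y/‖y‖)·η) ](x)·H(η) dσ(η), where for each such x the inner derivative exists for σ-almost every η; i.e., differentiation and integration may be interchanged even when x/‖x‖ lies in the closure of Γ. -/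
/-!
Replacing `log (1 - t)` by `log (ε + 1 - t)` in the kernel gives potentials that are `C¹` away from
the origin for each `ε > 0`, by the usual differentiation under the integral sign, since the kernel
is then smooth with bounded derivative. Writing `gap x η = 1 - (x / ‖x‖) · η`, the point is that the
derivatives of these potentials converge, locally uniformly in `x ≠ 0`, to the integral of the
derivative of the singular kernel. The theorem on limits of derivatives
(`hasFDerivAt_of_tendstoLocallyUniformlyOn`) then gives the derivative of `u`, and its continuity.

For the locally uniform convergence, the gradient of `gap` is at most
`√2 * √(gap x η) / ‖x‖` (`norm_dgap_le`), so the derivatives of the singular and the regularized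
kernel differ by at most `ε / (ε + gap x η) * (gap x η) ^ (-1/2) / ‖x‖` (`norm_dregKer_sub_le`).
Because `σ` is invariant under reflections, the integral of this bound over the whole sphere, up to
the factor `1 / ‖x‖`, is a quantity `err ε` which does not depend on `x` (`integral_comp_gap`). It
tends to zero by dominated convergence (`tendsto_err`), once `(gap pole) ^ (-1/2)` is known to be
integrable (`integrable_pole`). Near the pole the sphere is the image of a small disc under a
Lipschitz chart, so that `σ` is dominated by the image of a multiple of planar Lebesgue measure, and
the function is of size `1 / ‖z‖` in the chart (`exists_integrableOn_pole`). Finiteness of `σ`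
follows from the same chart by rotation invariance and compactness.
-/

open MeasureTheory Real
open scoped RealInnerProductSpace

noncomputable section

/-- The fundamental solution for the Beltrami operator. -/
def fundSol (t : ℝ) : ℝ := (1 / (4 * π)) * Real.log (1 - t) + (1 / (4 * π)) * (1 - Real.log 2)

open Filter Topology

/-! ### The kernel and its regularization -/

/-- The quantity `1 - cos θ`, where `θ` is the angle between `x ≠ 0` and the unit vector `η`. -/
def gap (x η : E3) : ℝ := 1 - ⟪‖x‖⁻¹ • x, η⟫

/-- The derivative of `gap` with respect to its first argument. -/
def dgap (x η : E3) : E3 →L[ℝ] ℝ :=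
  -(‖x‖⁻¹ • innerSL ℝ (η - ⟪‖x‖⁻¹ • x, η⟫ • (‖x‖⁻¹ • x)))

/-- The kernel `fundSol`, with its logarithmic singularity regularized by `ε`. -/
def regKer (ε : ℝ) (x η : E3) : ℝ :=
  (1 / (4 * π)) * Real.log (ε + gap x η) + (1 / (4 * π)) * (1 - Real.log 2)

/-- The derivative of `regKer` with respect to its spatial argument `x`. -/
def dregKer (ε : ℝ) (x η : E3) : E3 →L[ℝ] ℝ :=
  ((1 / (4 * π)) * (ε + gap x η)⁻¹) • dgap x η

lemma norm_normalize {x : E3} (hx : x ≠ 0) : ‖‖x‖⁻¹ • x‖ = 1 := by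
  rw [norm_smul, norm_inv, norm_norm, inv_mul_cancel₀ (norm_ne_zero_iff.2 hx)]

lemma gap_eq {x η : E3} (hx : x ≠ 0) (hη : ‖η‖ = 1) :
    gap x η = ‖‖x‖⁻¹ • x - η‖ ^ 2 / 2 := by
  rw [norm_sub_sq_real, norm_normalize hx, hη, gap]; ring

lemma gap_nonneg {x η : E3} (hx : x ≠ 0) (hη : ‖η‖ = 1) : 0 ≤ gap x η := by
  rw [gap_eq hx hη]; positivity

lemma gap_pos {x η : E3} (hx : x ≠ 0) (hη : ‖η‖ = 1) (h : η ≠ ‖x‖⁻¹ • x) : 0 < gap x η := by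
  rw [gap_eq hx hη]
  have := norm_pos_iff.2 (sub_ne_zero.2 h.symm)
  positivity

lemma gap_le_two {x η : E3} (hx : x ≠ 0) (hη : ‖η‖ = 1) : gap x η ≤ 2 := by
  have := neg_le_of_abs_le (abs_real_inner_le_norm (‖x‖⁻¹ • x) η)
  rw [norm_normalize hx, hη] at this
  rw [gap]; linarith

lemma hasFDerivAt_gap {x : E3} (hx : x ≠ 0) (η : E3) :
    HasFDerivAt (fun y => gap y η) (dgap x η) x := by
  have hn : ‖x‖ ≠ 0 := norm_ne_zero_iff.2 hx
  have h1 : HasFDerivAt (fun y : E3 => ‖y‖) (‖x‖⁻¹ • innerSL ℝ x) x := by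
    have h := (hasStrictFDerivAt_norm_sq x).hasFDerivAt.sqrt (by positivity)
    simp only [Real.sqrt_sq (norm_nonneg _)] at h
    refine h.congr_fderiv ?_
    ext y
    simp
    field_simp
  have h2 : HasFDerivAt (fun y : E3 => ⟪y, η⟫) (innerSL ℝ η) x := by
    refine (innerSL ℝ η).hasFDerivAt.congr_of_eventuallyEq (Eventually.of_forall fun y => ?_)
    simp [real_inner_comm]
  have h3 := (((hasDerivAt_inv hn).comp_hasFDerivAt x h1).mul h2).const_sub 1
  refine (h3.congr_fderiv ?_).congr_of_eventuallyEq (Eventually.of_forall fun y => ?_)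
  · ext y
    simp [dgap, inner_smul_left]
    field_simp
    ring
  · simp [gap, inner_smul_left]

/-- On the sphere the gradient of `gap` vanishes like the square root of `gap`; this gains half of
the order of the singularity of the derivative of the kernel. -/
lemma norm_dgap_le {x η : E3} (hx : x ≠ 0) (hη : ‖η‖ = 1) :
    ‖dgap x η‖ ≤ ‖x‖⁻¹ * (√2 * √(gap x η)) := by
  have h0 := gap_nonneg hx hη
  have h2 := gap_le_two hx hη
  rw [dgap, norm_neg, norm_smul, norm_inv, norm_norm, innerSL_apply_norm]
  refine mul_le_mul_of_nonneg_left ?_ (by positivity)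
  rw [← Real.sqrt_mul (by norm_num)]
  apply Real.le_sqrt_of_sq_le
  have hξ := norm_normalize hx
  set ξ := ‖x‖⁻¹ • x with hξdef
  have hg : gap x η = 1 - ⟪ξ, η⟫ := rfl
  rw [norm_sub_sq_real, norm_smul, mul_pow, inner_smul_right, hξ, hη, real_inner_comm ξ η, hg,
    Real.norm_eq_abs, sq_abs]
  nlinarith [sq_nonneg (1 - ⟪ξ, η⟫)]

lemma hasFDerivAt_regKer {ε : ℝ} {x η : E3} (hx : x ≠ 0) (h : ε + gap x η ≠ 0) :
    HasFDerivAt (fun y => regKer ε y η) (dregKer ε x η) x := by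
  have := ((((hasFDerivAt_gap hx η).const_add ε).log h).const_mul (1 / (4 * π))).add_const
    ((1 / (4 * π)) * (1 - Real.log 2))
  refine this.congr_fderiv ?_
  rw [dregKer, smul_smul]

lemma fundSol_eq (x η : E3) : fundSol ⟪‖x‖⁻¹ • x, η⟫ = regKer 0 x η := by
  simp [fundSol, regKer, gap]

@[fun_prop]
lemma continuous_gap (x : E3) : Continuous (gap x) := by
  unfold gap; fun_prop

@[fun_prop]
lemma continuous_dgap (x : E3) : Continuous (dgap x) := by
  unfold dgap; fun_prop

/-! ### The surface measure -/

instance : NullSingletonClass sphereMeasure := by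
  have : NullSingletonClass (μH[2] : Measure E3) := Measure.nullSingletonClass_hausdorff _ (by norm_num)
  unfold sphereMeasure; infer_instance

lemma ae_norm_eq_one : ∀ᵐ η ∂sphereMeasure, ‖η‖ = 1 := by
  filter_upwards [ae_restrict_mem (μ := μH[2]) (Metric.isClosed_sphere (x := (0 : E3)) (ε := 1)).measurableSet]
    with η hη
  simpa using hη

/-- The north pole of the sphere. -/
def pole : E3 := EuclideanSpace.single 2 1

lemma norm_pole : ‖pole‖ = 1 := by simp [pole]

/-- A reflection carries any given unit vector to the pole, and the surface measure is invariant
under it because Hausdorff measure is invariant under isometries. -/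
lemma exists_reflection {ξ : E3} (hξ : ‖ξ‖ = 1) :
    ∃ R : E3 ≃ₗᵢ[ℝ] E3, R ξ = pole ∧ MeasurePreserving R sphereMeasure sphereMeasure := by
  refine ⟨(ℝ ∙ (ξ - pole))ᗮ.reflection, Submodule.reflection_sub (hξ.trans norm_pole.symm), ?_⟩
  set R := (ℝ ∙ (ξ - pole))ᗮ.reflection
  have h := (R.toIsometryEquiv.measurePreserving_hausdorffMeasure 2).restrict_preimage
    (Metric.isClosed_sphere (x := (0 : E3)) (ε := 1)).measurableSet
  have hs : R.toIsometryEquiv ⁻¹' Metric.sphere (0 : E3) 1 = Metric.sphere 0 1 := by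
    ext y; simp
  rw [hs] at h
  exact h

/-- A parametrization of the upper hemisphere as a graph over the unit disc. Its domain carries the
sup norm, for which the Hausdorff measure of dimension 2 is Lebesgue measure. -/
def chart (z : Fin 2 → ℝ) : E3 := !₂[z 0, z 1, √(1 - z 0 ^ 2 - z 1 ^ 2)]

@[fun_prop]
lemma continuous_chart : Continuous chart := by
  unfold chart
  refine (PiLp.continuous_toLp 2 _).comp (continuous_pi fun i => ?_)
  fin_cases i <;> simp <;> fun_prop

lemma contDiffAt_chart : ContDiffAt ℝ 1 chart 0 := by
  rw [contDiffAt_euclidean]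
  intro i
  fin_cases i
  · simp only [chart]
    exact (contDiff_apply ℝ ℝ (0 : Fin 2)).contDiffAt
  · simp only [chart]
    exact (contDiff_apply ℝ ℝ (1 : Fin 2)).contDiffAt
  · simp only [chart]
    refine ContDiffAt.sqrt (f := fun z : Fin 2 → ℝ => 1 - z 0 ^ 2 - z 1 ^ 2) ?_ (by simp)
    fun_prop

lemma gap_pole (η : E3) : gap pole η = 1 - η 2 := by
  simp [gap, pole, EuclideanSpace.inner_single_left]

lemma gap_chart {z : Fin 2 → ℝ} (hz : ‖z‖ ≤ 1 / 2) : ‖z‖ ^ 2 / 4 ≤ gap pole (chart z) := by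
  have h0 : |z 0| ≤ 1 / 2 := (norm_le_pi_norm z 0).trans hz
  have h1 : |z 1| ≤ 1 / 2 := (norm_le_pi_norm z 1).trans hz
  have h0' : z 0 ^ 2 ≤ 1 / 4 := by
    rw [← sq_abs]; nlinarith [abs_nonneg (z 0)]
  have h1' : z 1 ^ 2 ≤ 1 / 4 := by
    rw [← sq_abs]; nlinarith [abs_nonneg (z 1)]
  have hle : ‖z‖ ^ 2 ≤ z 0 ^ 2 + z 1 ^ 2 := by
    have : ‖z‖ ≤ √(z 0 ^ 2 + z 1 ^ 2) := by
      refine (pi_norm_le_iff_of_nonneg (by positivity)).2 fun i => ?_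
      apply Real.le_sqrt_of_sq_le
      rw [Real.norm_eq_abs, sq_abs]
      fin_cases i
      · simpa using sq_nonneg (z 1)
      · simpa using sq_nonneg (z 0)
    calc ‖z‖ ^ 2 ≤ √(z 0 ^ 2 + z 1 ^ 2) ^ 2 := by gcongr
      _ = _ := Real.sq_sqrt (by positivity)
  have hs : √(1 - z 0 ^ 2 - z 1 ^ 2) ≤ 1 - (z 0 ^ 2 + z 1 ^ 2) / 2 := by
    rw [Real.sqrt_le_left (by linarith)]
    nlinarith [sq_nonneg (z 0 ^ 2 + z 1 ^ 2)]
  rw [gap_pole]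
  have : chart z 2 = √(1 - z 0 ^ 2 - z 1 ^ 2) := by simp [chart]
  rw [this]
  nlinarith [sq_nonneg (z 0), sq_nonneg (z 1)]

/-- Every point of the sphere close to the pole is in the image of a small disc under `chart`. -/
lemma mem_image_chart {η : E3} (hη : ‖η‖ = 1) {r : ℝ} (hr : r ≤ 1) (h : ‖η - pole‖ < r) :
    ∃ z : Fin 2 → ℝ, ‖z‖ < r ∧ chart z = η := by
  have hc (i : Fin 3) : |η i - pole i| < r := (PiLp.norm_apply_le (η - pole) i).trans_lt h
  have h0 := hc 0
  have h1 := hc 1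
  have h2 := hc 2
  simp [pole] at h0 h1 h2
  have hsum : η 0 ^ 2 + η 1 ^ 2 + η 2 ^ 2 = 1 := by
    have := EuclideanSpace.real_norm_sq_eq η
    rw [hη, Fin.sum_univ_three] at this
    linarith
  refine ⟨![η 0, η 1], ?_, ?_⟩
  · rw [pi_norm_lt_iff ((abs_nonneg _).trans_lt h0)]
    intro i
    fin_cases i
    · exact h0
    · exact h1
  · have hpos : 0 ≤ η 2 := by linarith [(abs_lt.1 h2).1]
    ext i
    fin_cases i
    · simp [chart]
    · simp [chart]
    · simp only [chart]
      have : 1 - η 0 ^ 2 - η 1 ^ 2 = η 2 ^ 2 := by linarith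
      simp [this, Real.sqrt_sq hpos]

lemma measurable_gap (x : E3) : Measurable (gap x) := (continuous_gap x).measurable

/-- Near the pole the surface measure is dominated by the image of planar Lebesgue measure, which
makes `gap pole ^ (-1/2)`, of size the inverse distance to the pole, integrable there. -/
lemma exists_integrableOn_pole : ∃ r > 0, sphereMeasure (Metric.ball pole r) < ⊤ ∧
    IntegrableOn (fun η => (√(gap pole η))⁻¹) (Metric.ball pole r) sphereMeasure := by
  obtain ⟨K, t, ht, hK⟩ := contDiffAt_chart.exists_lipschitzOnWith
  obtain ⟨r₀, hr₀, hball⟩ := Metric.mem_nhds_iff.1 ht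
  set r := min r₀ (1 / 2) with hr
  have hrpos : 0 < r := lt_min hr₀ (by norm_num)
  have hr2 : r ≤ 1 / 2 := min_le_right _ _
  have hvol : (μH[2] : Measure (Fin 2 → ℝ)) = volume := by
    have := hausdorffMeasure_pi_real (ι := Fin 2)
    simpa using this
  set B := Metric.ball (0 : Fin 2 → ℝ) r with hB
  have hBt : B ⊆ t := (Metric.ball_subset_ball (min_le_left _ _)).trans hball
  have hle : sphereMeasure.restrict (Metric.ball pole r) ≤
      ((K : ENNReal) ^ (2 : ℝ)) • (volume.restrict B).map chart := by
    refine Measure.le_iff.2 fun A hA => ?_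
    rw [Measure.restrict_apply hA, sphereMeasure,
      Measure.restrict_apply (hA.inter Metric.isOpen_ball.measurableSet), Measure.smul_apply,
      Measure.map_apply continuous_chart.measurable hA,
      Measure.restrict_apply (continuous_chart.measurable hA), ← hvol, smul_eq_mul]
    refine le_trans (measure_mono ?_)
      ((hK.mono (Set.inter_subset_right.trans hBt)).hausdorffMeasure_image_le (by norm_num))
    rintro η ⟨⟨hηA, hηb⟩, hηs⟩
    obtain ⟨z, hz, rfl⟩ := mem_image_chart (η := η) (r := r) (by simpa using hηs) (by linarith)
      (by simpa [dist_eq_norm] using hηb)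
    exact ⟨z, ⟨hηA, by simpa [hB] using hz⟩, rfl⟩
  have hKtop : (K : ENNReal) ^ (2 : ℝ) ≠ ⊤ := by simp
  refine ⟨r, hrpos, ?_, ?_⟩
  · have h := hle Set.univ
    rw [Measure.restrict_apply_univ] at h
    refine h.trans_lt ?_
    rw [Measure.smul_apply, Measure.map_apply continuous_chart.measurable .univ, Set.preimage_univ,
      Measure.restrict_apply_univ, smul_eq_mul]
    exact ENNReal.mul_lt_top hKtop.lt_top Metric.isBounded_ball.measure_lt_top
  · have hmeas : Measurable (fun η => (√(gap pole η))⁻¹) := (measurable_gap pole).sqrt.inv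
    refine Integrable.mono_measure (Integrable.smul_measure ?_ hKtop) hle
    rw [integrable_map_measure hmeas.aestronglyMeasurable continuous_chart.aemeasurable]
    refine integrableOn_ball_of_norm_le_rpow (C := 2) (α := 1) (by simp) (by simp) ?_
      (hmeas.comp continuous_chart.measurable).aestronglyMeasurable
    filter_upwards [ae_restrict_mem Metric.isOpen_ball.measurableSet] with z hz
    have hz' : ‖z‖ < r := by simpa using hz
    have hg := gap_chart (z := z) (by linarith)
    rw [Function.comp_apply, Real.norm_of_nonneg (by positivity), Real.rpow_neg_one]
    rcases eq_or_ne z 0 with rfl | hz0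
    · simp [gap_pole, chart]
    have hzpos : 0 < ‖z‖ := norm_pos_iff.2 hz0
    have : ‖z‖ / 2 ≤ √(gap pole (chart z)) := by
      apply Real.le_sqrt_of_sq_le
      linarith [div_pow ‖z‖ 2 2]
    calc (√(gap pole (chart z)))⁻¹ ≤ (‖z‖ / 2)⁻¹ := by gcongr
      _ = 2 * ‖z‖⁻¹ := by rw [inv_div]; ring
lemma pole_ne_zero : pole ≠ 0 := by
  rw [← norm_ne_zero_iff, norm_pole]; exact one_ne_zero

instance : IsFiniteMeasure sphereMeasure := by
  obtain ⟨r, hr, hfin, -⟩ := exists_integrableOn_pole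
  have hs : IsCompact (Metric.sphere (0 : E3) 1) := isCompact_sphere 0 1
  have : sphereMeasure (Metric.sphere (0 : E3) 1) < ⊤ := by
    refine hs.measure_lt_top_of_nhdsWithin fun ξ hξ => ?_
    obtain ⟨R, hR, hmp⟩ := exists_reflection (ξ := ξ) (by simpa using hξ)
    refine ⟨R ⁻¹' Metric.ball pole r, mem_nhdsWithin_of_mem_nhds ?_, ?_⟩
    · refine (Metric.isOpen_ball.preimage R.continuous).mem_nhds ?_
      rw [Set.mem_preimage, hR]
      exact Metric.mem_ball_self hr
    · rwa [hmp.measure_preimage Metric.isOpen_ball.measurableSet.nullMeasurableSet]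
  refine ⟨?_⟩
  rw [sphereMeasure, Measure.restrict_apply_univ]
  rwa [sphereMeasure, Measure.restrict_apply_self] at this

lemma integrable_pole : Integrable (fun η => (√(gap pole η))⁻¹) sphereMeasure := by
  obtain ⟨r, hr, -, hint⟩ := exists_integrableOn_pole
  rw [← integrableOn_univ, ← Set.union_compl_self (Metric.ball pole r)]
  refine hint.union ?_
  refine Integrable.mono' (g := fun _ => (√(r ^ 2 / 2))⁻¹) (integrable_const _)
    (measurable_gap pole).sqrt.inv.aestronglyMeasurable ?_
  filter_upwards [ae_restrict_mem Metric.isOpen_ball.measurableSet.compl,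
    ae_restrict_of_ae ae_norm_eq_one] with η hη h1
  rw [Real.norm_of_nonneg (by positivity), gap_eq pole_ne_zero h1, norm_pole, inv_one, one_smul]
  have : r ≤ ‖pole - η‖ := by simpa [dist_eq_norm, norm_sub_rev] using hη
  gcongr

lemma exists_reflection_gap {x : E3} (hx : x ≠ 0) :
    ∃ R : E3 ≃ₗᵢ[ℝ] E3, MeasurePreserving R sphereMeasure sphereMeasure ∧
      ∀ η, gap pole (R η) = gap x η := by
  obtain ⟨R, hR, hmp⟩ := exists_reflection (norm_normalize hx)
  refine ⟨R, hmp, fun η => ?_⟩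
  rw [gap, gap, norm_pole, inv_one, one_smul, ← hR, R.inner_map_map]

/-- Integrals of zonal functions do not depend on the direction of the axis. -/
lemma integral_comp_gap {x : E3} (hx : x ≠ 0) (f : ℝ → ℝ) :
    ∫ η, f (gap x η) ∂sphereMeasure = ∫ η, f (gap pole η) ∂sphereMeasure := by
  obtain ⟨R, hmp, h⟩ := exists_reflection_gap hx
  rw [← hmp.integral_comp R.toHomeomorph.measurableEmbedding (fun η => f (gap pole η))]
  exact integral_congr_ae (.of_forall fun η => by simp [h])

lemma integrable_inv_sqrt_gap {x : E3} (hx : x ≠ 0) :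
    Integrable (fun η => (√(gap x η))⁻¹) sphereMeasure := by
  obtain ⟨R, hmp, h⟩ := exists_reflection_gap hx
  simpa [Function.comp_def, h] using
    (hmp.integrable_comp_emb R.toHomeomorph.measurableEmbedding).2 integrable_pole

lemma ae_gap_pos {x : E3} (hx : x ≠ 0) : ∀ᵐ η ∂sphereMeasure, 0 < gap x η := by
  filter_upwards [ae_norm_eq_one, Measure.ae_ne sphereMeasure (‖x‖⁻¹ • x)] with η h1 h2
  exact gap_pos hx h1 h2

/-- A majorant of the regularized logarithm that is integrable over the sphere and uniform in
`ε`. -/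
lemma abs_log_add_le {s ε : ℝ} (hs : 0 < s) (hs2 : s ≤ 2) (hε : 0 ≤ ε) (hε1 : ε ≤ 1) :
    |Real.log (ε + s)| ≤ 2 * (√s)⁻¹ + 2 := by
  have hsq : 0 < √s := Real.sqrt_pos.2 hs
  rw [abs_le]
  constructor
  · have h1 := Real.log_le_sub_one_of_pos (inv_pos.2 hsq)
    rw [Real.log_inv, Real.log_sqrt hs.le] at h1
    have h2 : Real.log s ≤ Real.log (ε + s) := Real.log_le_log hs (by linarith)
    have : 0 < (√s)⁻¹ := inv_pos.2 hsq
    linarith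
  · have h1 := Real.log_le_sub_one_of_pos (show 0 < ε + s by linarith)
    have : 0 < (√s)⁻¹ := inv_pos.2 hsq
    linarith

/-- A bound, up to the factor `‖x‖⁻¹`, for the `L¹` distance between the derivatives of the
regularized and of the singular kernel. By rotation invariance it does not depend on the direction
of `x`, so it is written at the pole. -/
def err (ε : ℝ) : ℝ := ∫ η, ε / (ε + gap pole η) * (√(gap pole η))⁻¹ ∂sphereMeasure

lemma norm_frac_le {ε s : ℝ} (hε : 0 ≤ ε) (hs : 0 < s) :
    ‖ε / (ε + s) * (√s)⁻¹‖ ≤ (√s)⁻¹ := by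
  rw [Real.norm_of_nonneg (by positivity)]
  refine mul_le_of_le_one_left (by positivity) ?_
  rw [div_le_one (by positivity)]
  linarith

lemma tendsto_err {l : Filter ℕ} {e : ℕ → ℝ} [l.IsCountablyGenerated] (he : ∀ n, 0 ≤ e n)
    (hl : Tendsto e l (𝓝 0)) : Tendsto (fun n => err (e n)) l (𝓝 0) := by
  have : (0 : ℝ) = ∫ η : E3, (0 : ℝ) ∂sphereMeasure := by simp
  rw [this]
  refine tendsto_integral_filter_of_dominated_convergence (fun η => (√(gap pole η))⁻¹)
    (.of_forall fun n => ?_) (.of_forall fun n => ?_) integrable_pole ?_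
  · have := measurable_gap pole
    exact Measurable.aestronglyMeasurable (by fun_prop)
  · filter_upwards [ae_gap_pos pole_ne_zero] with η hη
    exact norm_frac_le (he n) hη
  · filter_upwards [ae_gap_pos pole_ne_zero] with η hη
    have h := (hl.div (hl.add_const (gap pole η)) (by simpa using hη.ne')).mul_const
      ((√(gap pole η))⁻¹)
    simpa using h

/-! ### Bounds for the regularized kernels -/

lemma norm_coeff : ‖(1 / (4 * π) : ℝ)‖ * √2 ≤ 1 := by
  have hπ := Real.pi_gt_three
  have h2 : √2 ≤ 2 := by rw [Real.sqrt_le_left (by norm_num)]; norm_num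
  rw [Real.norm_of_nonneg (by positivity), one_div, inv_mul_le_iff₀ (by positivity)]
  linarith

/-- A bound for `c • dgap x η` which absorbs the numerical constants. -/
lemma norm_smul_dgap_le {x η : E3} (hx : x ≠ 0) (hη : ‖η‖ = 1) (c : ℝ) :
    ‖((1 / (4 * π)) * c) • dgap x η‖ ≤ ‖x‖⁻¹ * (|c| * √(gap x η)) := by
  rw [norm_smul, norm_mul, Real.norm_eq_abs c]
  calc ‖(1 / (4 * π) : ℝ)‖ * |c| * ‖dgap x η‖
      ≤ ‖(1 / (4 * π) : ℝ)‖ * |c| * (‖x‖⁻¹ * (√2 * √(gap x η))) := by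
        gcongr; exact norm_dgap_le hx hη
    _ = (‖(1 / (4 * π) : ℝ)‖ * √2) * (‖x‖⁻¹ * (|c| * √(gap x η))) := by ring
    _ ≤ _ := mul_le_of_le_one_left (by positivity) norm_coeff

/-- The derivative of the kernel, singular or regularized, has a singularity of order one in the
distance of `η` from `x / ‖x‖`, hence is integrable over the sphere. -/
lemma norm_dregKer_le {ε : ℝ} {x η : E3} (hε : 0 ≤ ε) (hx : x ≠ 0) (hη : ‖η‖ = 1)
    (hg : 0 < gap x η) : ‖dregKer ε x η‖ ≤ ‖x‖⁻¹ * (√(gap x η))⁻¹ := by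
  refine (norm_smul_dgap_le hx hη _).trans ?_
  gcongr
  rw [abs_of_nonneg (by positivity)]
  calc (ε + gap x η)⁻¹ * √(gap x η) ≤ (gap x η)⁻¹ * √(gap x η) := by gcongr; linarith
    _ = (√(gap x η))⁻¹ := by
      rw [inv_mul_eq_div, Real.sqrt_div_self', one_div]

/-- For positive `ε` the derivative of the regularized kernel is bounded. -/
lemma norm_dregKer_le_const {ε : ℝ} {x η : E3} (hε : 0 < ε) (hx : x ≠ 0) (hη : ‖η‖ = 1) :
    ‖dregKer ε x η‖ ≤ ‖x‖⁻¹ * (ε⁻¹ * √2) := by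
  have hg := gap_nonneg hx hη
  refine (norm_smul_dgap_le hx hη _).trans ?_
  rw [abs_of_nonneg (by positivity)]
  gcongr
  · linarith
  · exact gap_le_two hx hη

lemma norm_dregKer_sub_le {ε : ℝ} {x η : E3} (hε : 0 ≤ ε) (hx : x ≠ 0) (hη : ‖η‖ = 1)
    (hg : 0 < gap x η) : ‖dregKer 0 x η - dregKer ε x η‖ ≤
      ‖x‖⁻¹ * (ε / (ε + gap x η) * (√(gap x η))⁻¹) := by
  have h0 : dregKer 0 x η - dregKer ε x η =
      ((1 / (4 * π)) * ((0 + gap x η)⁻¹ - (ε + gap x η)⁻¹)) • dgap x η := by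
    rw [mul_sub]; exact (sub_smul _ _ _).symm
  rw [h0]
  refine (norm_smul_dgap_le hx hη _).trans (le_of_eq ?_)
  have h1 : (0 + gap x η)⁻¹ - (ε + gap x η)⁻¹ = ε / (ε + gap x η) * (gap x η)⁻¹ := by
    field_simp
    ring
  rw [h1, abs_of_nonneg (by positivity), mul_assoc _ (gap x η)⁻¹, inv_mul_eq_div (gap x η),
    Real.sqrt_div_self', one_div]

lemma measurable_regKer (ε : ℝ) (x : E3) : Measurable (regKer ε x) := by
  have := measurable_gap x
  unfold regKer
  fun_prop

lemma aestronglyMeasurable_dregKer (ε : ℝ) (x : E3) (μ : Measure E3) :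
    AEStronglyMeasurable (dregKer ε x) μ := by
  have := measurable_gap x
  have h : Measurable fun η => (1 / (4 * π)) * (ε + gap x η)⁻¹ := by fun_prop
  exact h.aestronglyMeasurable.smul (continuous_dgap x).aestronglyMeasurable

lemma continuousAt_dregKer {ε : ℝ} {x η : E3} (hx : x ≠ 0) (h : ε + gap x η ≠ 0) :
    ContinuousAt (fun y => dregKer ε y η) x := by
  have h1 := (hasFDerivAt_gap hx η).continuousAt
  have h2 : ContinuousAt (fun y : E3 => ‖y‖⁻¹) x :=
    continuousAt_id.norm.inv₀ (norm_ne_zero_iff.2 hx)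
  have h3 : ContinuousAt (fun y => dgap y η) x := by unfold dgap; fun_prop
  exact (continuousAt_const.mul ((h1.const_add ε).inv₀ h)).smul h3

lemma exists_bound {H : E3 → ℝ} (hH : Continuous H) :
    ∃ M, 0 ≤ M ∧ ∀ η : E3, ‖η‖ = 1 → ‖H η‖ ≤ M := by
  obtain ⟨M, hM⟩ := (isCompact_sphere (0 : E3) 1).exists_bound_of_continuousOn hH.continuousOn
  exact ⟨max M 0, le_max_right _ _, fun η hη => (hM η (by simpa using hη)).trans (le_max_left _ _)⟩

lemma norm_regKer_le {ε : ℝ} {x η : E3} (hε : 0 ≤ ε) (hε1 : ε ≤ 1) (hx : x ≠ 0) (hη : ‖η‖ = 1)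
    (hg : 0 < gap x η) : ‖regKer ε x η‖ ≤ ‖(1 / (4 * π) : ℝ)‖ * (2 * (√(gap x η))⁻¹ + 2) +
      ‖(1 / (4 * π)) * (1 - Real.log 2)‖ := by
  refine (norm_add_le _ _).trans ?_
  rw [norm_mul]
  gcongr
  exact abs_log_add_le hg (gap_le_two hx hη) hε hε1

/-! ### The regularized potentials and their limit -/

section Potential

variable {Γ : Set E3} {H : E3 → ℝ}

lemma ae_good {x : E3} (hx : x ≠ 0) :
    ∀ᵐ η ∂(sphereMeasure.restrict Γ), ‖η‖ = 1 ∧ 0 < gap x η :=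
  ae_restrict_of_ae (ae_norm_eq_one.and (ae_gap_pos hx))

/-- An integrable majorant, uniform in `ε`, for the regularized kernels at `x`. -/
lemma integrable_majorant {x : E3} (hx : x ≠ 0) (M a b : ℝ) :
    Integrable (fun η => (a * (2 * (√(gap x η))⁻¹ + 2) + b) * M)
      (sphereMeasure.restrict Γ) := by
  have h := (integrable_inv_sqrt_gap hx).restrict (s := Γ)
  exact ((((h.const_mul 2).add (integrable_const 2)).const_mul a).add (integrable_const b)).mul_const M

lemma integrable_regKer (hH : Continuous H) {ε : ℝ} (hε : 0 ≤ ε) (hε1 : ε ≤ 1) {x : E3}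
    (hx : x ≠ 0) : Integrable (fun η => regKer ε x η * H η) (sphereMeasure.restrict Γ) := by
  obtain ⟨M, hM0, hM⟩ := exists_bound hH
  refine (integrable_majorant hx M ‖(1 / (4 * π) : ℝ)‖ ‖(1 / (4 * π)) * (1 - Real.log 2)‖).mono'
    ((measurable_regKer ε x).mul hH.measurable).aestronglyMeasurable ?_
  filter_upwards [ae_good hx] with η ⟨h1, hg⟩
  rw [norm_mul]
  exact mul_le_mul (norm_regKer_le hε hε1 hx h1 hg) (hM η h1) (norm_nonneg _) (by positivity)

lemma integrable_dregKer (hH : Continuous H) {ε : ℝ} (hε : 0 ≤ ε) {x : E3} (hx : x ≠ 0) :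
    Integrable (fun η => H η • dregKer ε x η) (sphereMeasure.restrict Γ) := by
  obtain ⟨M, hM0, hM⟩ := exists_bound hH
  refine ((((integrable_inv_sqrt_gap hx).restrict (s := Γ)).const_mul ‖x‖⁻¹).const_mul M).mono'
    (hH.aestronglyMeasurable.smul (aestronglyMeasurable_dregKer ε x _)) ?_
  filter_upwards [ae_good hx] with η ⟨h1, hg⟩
  rw [norm_smul]
  exact mul_le_mul (hM η h1) (norm_dregKer_le hε hx h1 hg) (norm_nonneg _) hM0

/-- On the ball of radius `‖x‖ / 2` around `x`, the integrand defining the derivative of the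
regularized potential is bounded by a constant. -/
lemma exists_local_bound (hH : Continuous H) {ε : ℝ} (hε : 0 < ε) {x : E3} (hx : x ≠ 0) :
    ∃ C, ∀ y ∈ Metric.ball x (‖x‖ / 2), y ≠ 0 ∧
      ∀ η : E3, ‖η‖ = 1 → ‖H η • dregKer ε y η‖ ≤ C := by
  obtain ⟨M, hM0, hM⟩ := exists_bound hH
  have hxn := norm_pos_iff.2 hx
  refine ⟨M * ((‖x‖ / 2)⁻¹ * (ε⁻¹ * √2)), fun y hy => ?_⟩
  have hyn : ‖x‖ / 2 ≤ ‖y‖ := by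
    have h1 : ‖x - y‖ < ‖x‖ / 2 := by simpa [dist_eq_norm, norm_sub_rev] using hy
    have h2 := norm_sub_norm_le x y
    linarith
  have hy0 : y ≠ 0 := norm_pos_iff.1 (by linarith)
  refine ⟨hy0, fun η hη => ?_⟩
  rw [norm_smul]
  refine mul_le_mul (hM η hη) ((norm_dregKer_le_const hε hy0 hη).trans ?_) (norm_nonneg _) hM0
  gcongr

lemma hasFDerivAt_regPotential (hH : Continuous H) {ε : ℝ} (hε : 0 < ε) (hε1 : ε ≤ 1) {x : E3}
    (hx : x ≠ 0) : HasFDerivAt (fun y => ∫ η in Γ, regKer ε y η * H η ∂sphereMeasure)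
      (∫ η in Γ, H η • dregKer ε x η ∂sphereMeasure) x := by
  obtain ⟨C, hC⟩ := exists_local_bound hH hε hx
  refine hasFDerivAt_integral_of_dominated_of_fderiv_le (bound := fun _ => C)
    (F' := fun y η => H η • dregKer ε y η)
    (Metric.ball_mem_nhds x (half_pos (norm_pos_iff.2 hx)))
    (.of_forall fun y => ((measurable_regKer ε y).mul hH.measurable).aestronglyMeasurable)
    (integrable_regKer hH hε.le hε1 hx) (integrable_dregKer hH hε.le hx).aestronglyMeasurable
    ?_ (integrable_const C) ?_
  · filter_upwards [ae_good hx] with η ⟨h1, _⟩ y hy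
    exact (hC y hy).2 η h1
  · filter_upwards [ae_good hx] with η ⟨h1, _⟩ y hy
    have hy0 := (hC y hy).1
    have := gap_nonneg hy0 h1
    exact (hasFDerivAt_regKer hy0 (by positivity)).mul_const (H η)

lemma continuousAt_regPotential_deriv (hH : Continuous H) {ε : ℝ} (hε : 0 < ε) {x : E3}
    (hx : x ≠ 0) : ContinuousAt (fun y => ∫ η in Γ, H η • dregKer ε y η ∂sphereMeasure) x := by
  obtain ⟨C, hC⟩ := exists_local_bound hH hε hx
  have hnhds := Metric.ball_mem_nhds x (half_pos (norm_pos_iff.2 hx))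
  refine continuousAt_of_dominated (bound := fun _ => C)
    (.of_forall fun y => hH.aestronglyMeasurable.smul (aestronglyMeasurable_dregKer ε y _))
    ?_ (integrable_const C) ?_
  · filter_upwards [hnhds] with y hy
    filter_upwards [ae_good hx] with η ⟨h1, _⟩
    exact (hC y hy).2 η h1
  · filter_upwards [ae_good hx] with η ⟨h1, hg⟩
    exact (continuousAt_const (y := H η)).smul (continuousAt_dregKer hx (by positivity))

/-- The derivatives of the regularized potentials converge at a rate which depends on `x` only
through `‖x‖`, and not on the position of `x / ‖x‖` relative to `Γ`. -/
lemma norm_deriv_sub_le (hH : Continuous H) {M : ℝ} (hM0 : 0 ≤ M)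
    (hM : ∀ η : E3, ‖η‖ = 1 → ‖H η‖ ≤ M) {ε : ℝ} (hε : 0 ≤ ε) {x : E3} (hx : x ≠ 0) :
    ‖(∫ η in Γ, H η • dregKer 0 x η ∂sphereMeasure) -
      ∫ η in Γ, H η • dregKer ε x η ∂sphereMeasure‖ ≤ M * ‖x‖⁻¹ * err ε := by
  have hint : Integrable (fun η => ε / (ε + gap x η) * (√(gap x η))⁻¹) sphereMeasure := by
    have := measurable_gap x
    refine (integrable_inv_sqrt_gap hx).mono' (Measurable.aestronglyMeasurable (by fun_prop)) ?_
    filter_upwards [ae_gap_pos hx] with η hη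
    exact norm_frac_le hε hη
  rw [← integral_sub (integrable_dregKer hH le_rfl hx) (integrable_dregKer hH hε hx)]
  calc _ ≤ ∫ η in Γ, M * ‖x‖⁻¹ * (ε / (ε + gap x η) * (√(gap x η))⁻¹) ∂sphereMeasure := by
        refine norm_integral_le_of_norm_le (hint.restrict.const_mul _) ?_
        filter_upwards [ae_good hx] with η ⟨h1, hg⟩
        have h0 : H η • dregKer 0 x η - H η • dregKer ε x η =
            H η • (dregKer 0 x η - dregKer ε x η) := (smul_sub _ _ _).symm
        rw [h0, norm_smul, mul_assoc M]
        exact mul_le_mul (hM η h1) (norm_dregKer_sub_le hε hx h1 hg) (norm_nonneg _) hM0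
    _ ≤ ∫ η, M * ‖x‖⁻¹ * (ε / (ε + gap x η) * (√(gap x η))⁻¹) ∂sphereMeasure := by
        refine setIntegral_le_integral (hint.const_mul _) ?_
        filter_upwards [ae_gap_pos hx] with η hg
        simp only [Pi.zero_apply]
        positivity
    _ = _ := by
        rw [integral_const_mul, err, integral_comp_gap hx fun s => ε / (ε + s) * (√s)⁻¹]

/-- The sequence of regularization parameters. -/
def eps (n : ℕ) : ℝ := 1 / ((n : ℝ) + 1)

lemma eps_pos (n : ℕ) : 0 < eps n := by unfold eps; positivity

lemma eps_le_one (n : ℕ) : eps n ≤ 1 := by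
  unfold eps
  rw [div_le_one (by positivity)]
  linarith [n.cast_nonneg (α := ℝ)]

lemma tendsto_eps : Tendsto eps atTop (𝓝 0) := tendsto_one_div_add_atTop_nhds_zero_nat

lemma tendsto_regPotential (hH : Continuous H) {x : E3} (hx : x ≠ 0) :
    Tendsto (fun n => ∫ η in Γ, regKer (eps n) x η * H η ∂sphereMeasure) atTop
      (𝓝 (∫ η in Γ, regKer 0 x η * H η ∂sphereMeasure)) := by
  obtain ⟨M, hM0, hM⟩ := exists_bound hH
  refine tendsto_integral_of_dominated_convergence _
    (fun n => ((measurable_regKer _ x).mul hH.measurable).aestronglyMeasurable)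
    (integrable_majorant hx M ‖(1 / (4 * π) : ℝ)‖ ‖(1 / (4 * π)) * (1 - Real.log 2)‖)
    (fun n => ?_) ?_
  · filter_upwards [ae_good hx] with η ⟨h1, hg⟩
    rw [norm_mul]
    exact mul_le_mul (norm_regKer_le (eps_pos n).le (eps_le_one n) hx h1 hg) (hM η h1)
      (norm_nonneg _) (by positivity)
  · filter_upwards [ae_good hx] with η ⟨h1, hg⟩
    have h : Tendsto (fun n => eps n + gap x η) atTop (𝓝 (0 + gap x η)) :=
      tendsto_eps.add_const _
    exact (((h.log (by linarith [hg] : 0 + gap x η > 0).ne').const_mul _).add_const _).mul_const _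

lemma tendstoLocallyUniformlyOn_deriv (hH : Continuous H) :
    TendstoLocallyUniformlyOn (fun n x => ∫ η in Γ, H η • dregKer (eps n) x η ∂sphereMeasure)
      (fun x => ∫ η in Γ, H η • dregKer 0 x η ∂sphereMeasure) atTop {x : E3 | x ≠ 0} := by
  obtain ⟨M, hM0, hM⟩ := exists_bound hH
  rw [Metric.tendstoLocallyUniformlyOn_iff]
  intro δ hδ x hx
  have hxn : 0 < ‖x‖ := norm_pos_iff.2 hx
  refine ⟨{y | ‖x‖ / 2 < ‖y‖}, mem_nhdsWithin_of_mem_nhds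
    ((isOpen_lt continuous_const continuous_norm).mem_nhds (by simpa using hxn)), ?_⟩
  have hlim : Tendsto (fun n => M * (‖x‖ / 2)⁻¹ * err (eps n)) atTop (𝓝 0) := by
    simpa using (tendsto_err (fun n => (eps_pos n).le) tendsto_eps).const_mul (M * (‖x‖ / 2)⁻¹)
  have herr (n : ℕ) : 0 ≤ err (eps n) := by
    refine integral_nonneg_of_ae ?_
    filter_upwards [ae_gap_pos pole_ne_zero] with η hg
    have := eps_pos n
    simp only [Pi.zero_apply]
    positivity
  filter_upwards [hlim.eventually_lt_const hδ] with n hn y hy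
  have hy' : ‖x‖ / 2 < ‖y‖ := hy
  have hy0 : y ≠ 0 := norm_pos_iff.1 (by linarith)
  rw [dist_eq_norm]
  refine ((norm_deriv_sub_le hH hM0 hM (eps_pos n).le hy0).trans ?_).trans_lt hn
  have := herr n
  gcongr

end Potential

/-- Differentiability of the surface potential: differentiation and
integration may be interchanged, even when x/‖x‖ lies in the closure of Γ. -/
theorem surface_potential_C1 (Γ : Set E3) (hΓ : MeasurableSet Γ)
    (H : E3 → ℝ) (hH : Continuous H)
    (u : E3 → ℝ)
    (hu : ∀ x : E3, u x = ∫ η in Γ, fundSol ⟪‖x‖⁻¹ • x, η⟫ * H η ∂sphereMeasure) :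
    ContDiffOn ℝ 1 u {x : E3 | x ≠ 0} ∧
      ∀ x : E3, x ≠ 0 →
        (∀ᵐ η ∂(sphereMeasure.restrict Γ),
          DifferentiableAt ℝ (fun y : E3 => fundSol ⟪‖y‖⁻¹ • y, η⟫) x) ∧
        fderiv ℝ u x =
          ∫ η in Γ, H η • fderiv ℝ (fun y : E3 => fundSol ⟪‖y‖⁻¹ • y, η⟫) x ∂sphereMeasure := by
  have hopen : IsOpen {x : E3 | x ≠ 0} := isOpen_ne
  have hder : ∀ x : E3, x ≠ 0 →
      HasFDerivAt u (∫ η in Γ, H η • dregKer 0 x η ∂sphereMeasure) x := by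
    intro x hx
    refine hasFDerivAt_of_tendstoLocallyUniformlyOn (x := x) hopen
      (tendstoLocallyUniformlyOn_deriv hH)
      (fun n y hy => hasFDerivAt_regPotential hH (eps_pos n) (eps_le_one n) hy)
      (fun y hy => ?_) hx
    simp_rw [hu, fundSol_eq]
    exact tendsto_regPotential hH hy
  have hcont : ContinuousOn (fun x => ∫ η in Γ, H η • dregKer 0 x η ∂sphereMeasure)
      {x : E3 | x ≠ 0} :=
    (tendstoLocallyUniformlyOn_deriv hH).continuousOn <| Frequently.of_forall fun n x hx =>
      (continuousAt_regPotential_deriv hH (eps_pos n) hx).continuousWithinAt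
  refine ⟨?_, fun x hx => ?_⟩
  · rw [show (1 : WithTop ℕ∞) = 0 + 1 from rfl, contDiffOn_succ_iff_fderiv_of_isOpen hopen]
    refine ⟨fun x hx => (hder x hx).differentiableAt.differentiableWithinAt, by simp, ?_⟩
    rw [contDiffOn_zero]
    exact hcont.congr fun x hx => (hder x hx).fderiv
  · have hker : ∀ᵐ η ∂(sphereMeasure.restrict Γ),
        HasFDerivAt (fun y : E3 => fundSol ⟪‖y‖⁻¹ • y, η⟫) (dregKer 0 x η) x := by
      filter_upwards [ae_good hx] with η ⟨_, hg⟩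
      simp_rw [fundSol_eq]
      exact hasFDerivAt_regKer hx (by positivity)
    refine ⟨hker.mono fun η h => h.differentiableAt, ?_⟩
    rw [(hder x hx).fderiv]
    refine integral_congr_ae ?_
    filter_upwards [hker] with η h
    rw [h.fderiv]

end
end

section
/- Jump relation for the double-layer potential on a spherical cap: Let ζ ∈ S², ρ ∈ (0,2), let e₁, e₂ be an orthonormal pair perpendicular to ζ, set c(θ) = (1−ρ)ζ + √(ρ(2−ρ))·(cos θ · e₁ + sin θ · e₂), and let Q : S² → ℝ be continuous. Define the double-layer potential W(ξ) = (1/(4π))·∫₀^{2π} (ζ − (1−ρ)c(θ)) · (ξ − (ξ·c(θ))c(θ)) / (1 − ξ·c(θ)) · Q(c(θ)) dθ for ξ ∈ S² with ζ·ξ ≠ 1−ρ. Then for every ξ₀ ∈ S² with ζ·ξ₀ = 1−ρ, setting ν(ξ₀) = −(ζ − (1−ρ)ξ₀)/√(ρ(2−ρ)): lim_{τ→0⁺} [ W((ξ₀ + τ·ν(ξ₀))/√(1+τ²)) − W((ξ₀ − τ·ν(ξ₀))/√(1+τ²)) ] = −Q(ξ₀). -/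
/-!
With `a = 1 - ρ` and `s = √(ρ(2 - ρ))`, the vector `ζ - a c(θ)` is tangent to the sphere at `c(θ)`,
so the numerator of the kernel of `W` is `ζ·ξ - a ξ·c(θ) = (ζ·ξ - a) + a (1 - ξ·c(θ))`. Hence
`4π W(ξ) = a ∫ Q(c θ) dθ + (ζ·ξ - a) ∫ Q(c θ) / (1 - ξ·c(θ)) dθ`:
the first term is the same on both sides of the boundary, and `|ζ·ξ - a| / (1 - ξ·c(θ))` is a
Poisson kernel `m / (p - q cos(θ - θ₀))` with `p ^ 2 = q ^ 2 + m ^ 2`, of total mass `2π` and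
concentrating at `ξ₀` as `ξ → ξ₀`. The factor `ζ·ξ - a` is negative outside the cap and positive
inside it, so the two one-sided contributions are `∓ 2π Q(ξ₀)`.

`poisson_mass` computes the mass from an explicit periodic primitive, and `poisson_tendsto` is the
approximate identity property. The latter avoids splitting the circle: a continuous density satisfies
`|g - g₀| ≤ ε + K (1 - cos(θ - θ₀))`, and `(1 - cos) / (p - q cos) ≤ 1 / q`. The point `(cos θ₀, sin θ₀)`
is kept as a unit vector `(x, y)`.
-/

open MeasureTheory Real intervalIntegral Filter
open scoped RealInnerProductSpace Topology

noncomputable section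

lemma cos_sin_comb_le {x y : ℝ} (hxy : x ^ 2 + y ^ 2 = 1) (θ : ℝ) :
    |x * cos θ + y * sin θ| ≤ 1 := by
  rw [← sq_le_one_iff_abs_le_one]
  nlinarith [sq_nonneg (x * sin θ - y * cos θ), sin_sq_add_cos_sq θ]

lemma poisson_denom_pos {x y p q m : ℝ} (hxy : x ^ 2 + y ^ 2 = 1) (hp : 0 < p) (hm : 0 < m)
    (h : p ^ 2 = q ^ 2 + m ^ 2) (θ : ℝ) : 0 < p - q * (x * cos θ + y * sin θ) := by
  have hk := cos_sin_comb_le hxy θ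
  have hq : |q| < p := abs_lt_of_sq_lt_sq (by nlinarith) hp.le
  have h1 : q * (x * cos θ + y * sin θ) ≤ |q| := by
    calc _ ≤ |q * (x * cos θ + y * sin θ)| := le_abs_self _
      _ = |q| * |x * cos θ + y * sin θ| := abs_mul _ _
      _ ≤ |q| * 1 := by gcongr
      _ = |q| := mul_one _
  linarith

lemma poisson_continuous {x y p q m : ℝ} (hxy : x ^ 2 + y ^ 2 = 1) (hp : 0 < p) (hm : 0 < m)
    (h : p ^ 2 = q ^ 2 + m ^ 2) :
    Continuous fun θ : ℝ => m / (p - q * (x * cos θ + y * sin θ)) :=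
  Continuous.div (by fun_prop) (by fun_prop) fun θ => (poisson_denom_pos hxy hp hm h θ).ne'

/-- The Poisson kernel has total mass `2π`. -/
lemma poisson_mass {x y p q m : ℝ} (hxy : x ^ 2 + y ^ 2 = 1) (hp : 0 < p) (hm : 0 < m)
    (h : p ^ 2 = q ^ 2 + m ^ 2) :
    ∫ θ in (0:ℝ)..(2 * π), m / (p - q * (x * cos θ + y * sin θ)) = 2 * π := by
  -- `θ + 2 arg (1 / (1 - r e^{i(θ - θ₀)}))` is a primitive, where `r = q / (p + m)`.
  have key : ∀ θ : ℝ, HasDerivAt (fun θ : ℝ => θ + 2 * arctan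
      (q * (x * sin θ - y * cos θ) / (p + m - q * (x * cos θ + y * sin θ))))
      (m / (p - q * (x * cos θ + y * sin θ))) θ := by
    intro θ
    have hD := poisson_denom_pos hxy hp hm h θ
    have hE : p + m - q * (x * cos θ + y * sin θ) ≠ 0 := by linarith
    have hk : HasDerivAt (fun θ : ℝ => p + m - q * (x * cos θ + y * sin θ))
        (q * (x * sin θ - y * cos θ)) θ := by
      have := ((((hasDerivAt_cos θ).const_mul x).add
        ((hasDerivAt_sin θ).const_mul y)).const_mul q).const_sub (p + m)
      exact this.congr_deriv (by ring)
    have hj : HasDerivAt (fun θ : ℝ => q * (x * sin θ - y * cos θ))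
        (q * (x * cos θ + y * sin θ)) θ := by
      have := ((((hasDerivAt_sin θ).const_mul x).sub
        ((hasDerivAt_cos θ).const_mul y))).const_mul q
      exact this.congr_deriv (by ring)
    have := (hasDerivAt_id θ).add (((hj.fun_div hk hE).arctan).const_mul 2)
    refine this.congr_deriv ?_
    have hkj : (x * sin θ - y * cos θ) ^ 2 = 1 - (x * cos θ + y * sin θ) ^ 2 := by
      nlinarith [sin_sq_add_cos_sq θ]
    generalize x * cos θ + y * sin θ = k at *
    generalize x * sin θ - y * cos θ = j at *
    have hS : (p + m - q * k) ^ 2 + (q * j) ^ 2 = 2 * (p + m) * (p - q * k) := by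
      rw [mul_pow, hkj]; linear_combination -h
    have h2 : 1 + (q * j / (p + m - q * k)) ^ 2
        = 2 * (p + m) * (p - q * k) / (p + m - q * k) ^ 2 := by
      rw [← hS]; field_simp
    have hpm : p + m ≠ 0 := by positivity
    rw [h2]
    have hD' := hD.ne'
    field_simp
    linear_combination -q ^ 2 * hkj + h
  rw [integral_eq_sub_of_hasDerivAt (fun θ _ => key θ)
    ((poisson_continuous hxy hp hm h).intervalIntegrable _ _)]
  simp

/-- The Poisson kernel is an approximate identity as `m → 0`. The hypothesis `hg` is the continuity of
a bounded `g` at the angle of `(x, y)`, in the form that can be integrated against the kernel. -/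
lemma poisson_tendsto {l : Filter ℝ} {x y : ℝ} (hxy : x ^ 2 + y ^ 2 = 1)
    {g : ℝ → ℝ} (hgc : Continuous g) {g₀ : ℝ}
    (hg : ∀ ε > 0, ∃ K ≥ 0, ∀ θ, |g θ - g₀| ≤ ε + K * (1 - (x * cos θ + y * sin θ)))
    {p q m : ℝ → ℝ} {q₀ : ℝ} (hq₀ : 0 < q₀) (hq : Tendsto q l (𝓝 q₀)) (hm : Tendsto m l (𝓝 0))
    (hp : ∀ᶠ t in l, 0 < p t) (hm0 : ∀ᶠ t in l, 0 < m t)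
    (h : ∀ᶠ t in l, p t ^ 2 = q t ^ 2 + m t ^ 2) :
    Tendsto (fun t => ∫ θ in (0:ℝ)..(2 * π),
      m t / (p t - q t * (x * cos θ + y * sin θ)) * g θ) l (𝓝 (2 * π * g₀)) := by
  rw [Metric.tendsto_nhds]
  intro ε hε
  have hpi := Real.pi_pos
  obtain ⟨K, hK, hgK⟩ := hg (ε / (4 * π)) (by positivity)
  have hlim : Tendsto (fun t => 2 * π * (K * (m t / q t))) l (𝓝 0) := by
    have := ((hm.div hq hq₀.ne').const_mul K).const_mul (2 * π)
    simpa using this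
  filter_upwards [hp, hm0, h, hq.eventually (lt_mem_nhds hq₀),
    hlim.eventually (gt_mem_nhds (half_pos hε))] with t hp hm0 h hq hsm
  have hc := poisson_continuous hxy hp hm0 h
  have hmass := poisson_mass hxy hp hm0 h
  have hpq : q t < p t := lt_of_pow_lt_pow_left₀ 2 hp.le (by nlinarith)
  rw [Real.dist_eq]
  have e1 : (∫ θ in (0:ℝ)..(2 * π), m t / (p t - q t * (x * cos θ + y * sin θ)) * g θ)
      - 2 * π * g₀ = ∫ θ in (0:ℝ)..(2 * π),
        m t / (p t - q t * (x * cos θ + y * sin θ)) * (g θ - g₀) := by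
    simp_rw [mul_sub]
    rw [integral_sub ((hc.fun_mul hgc).intervalIntegrable _ _)
      ((hc.fun_mul continuous_const).intervalIntegrable _ _), intervalIntegral.integral_mul_const, hmass]
  have e2 : (∫ θ in (0:ℝ)..(2 * π), (m t / (p t - q t * (x * cos θ + y * sin θ)) * (ε / (4 * π))
      + K * (m t / q t))) = ε / 2 + 2 * π * (K * (m t / q t)) := by
    rw [intervalIntegral.integral_add ((hc.fun_mul continuous_const).intervalIntegrable _ _)
      (continuous_const.intervalIntegrable _ _), intervalIntegral.integral_mul_const, hmass,
      intervalIntegral.integral_const, smul_eq_mul, sub_zero]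
    congr 1
    field_simp; norm_num
  rw [e1]
  calc _ ≤ ∫ θ in (0:ℝ)..(2 * π), (m t / (p t - q t * (x * cos θ + y * sin θ)) * (ε / (4 * π))
      + K * (m t / q t)) := by
        rw [← Real.norm_eq_abs]
        refine norm_integral_le_of_norm_le (by positivity) (ae_of_all _ fun θ _ => ?_)
          (((hc.mul continuous_const).add continuous_const).intervalIntegrable _ _)
        have hD := poisson_denom_pos hxy hp hm0 h θ
        have hk := (abs_le.1 (cos_sin_comb_le hxy θ)).2
        have hgθ := hgK θ
        generalize x * cos θ + y * sin θ = k at *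
        rw [Real.norm_eq_abs, abs_mul, abs_of_pos (div_pos hm0 hD)]
        calc _ ≤ m t / (p t - q t * k) * (ε / (4 * π) + K * (1 - k)) := by gcongr
          _ = m t / (p t - q t * k) * (ε / (4 * π)) + K * (m t * (1 - k) / (p t - q t * k)) := by
            ring
          _ ≤ _ := by
            refine add_le_add le_rfl (mul_le_mul_of_nonneg_left ?_ hK)
            rw [div_le_div_iff₀ hD hq]
            have : q t * (1 - k) ≤ p t - q t * k := by linarith
            nlinarith [mul_le_mul_of_nonneg_left this hm0.le]
    _ < ε := by rw [e2]; linarith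

/-- A function continuous on the (compact) sphere is controlled near `ξ₀` by `ε + K ‖η - ξ₀‖ ^ 2`. -/
lemma sphere_modulus {Q : E3 → ℝ} (hQ : ContinuousOn Q (Metric.sphere (0 : E3) 1))
    {ξ₀ : E3} (hξ₀ : ξ₀ ∈ Metric.sphere (0 : E3) 1) {ε : ℝ} (hε : 0 < ε) :
    ∃ K ≥ 0, ∀ η ∈ Metric.sphere (0 : E3) 1, |Q η - Q ξ₀| ≤ ε + K * ‖η - ξ₀‖ ^ 2 := by
  obtain ⟨M, hM⟩ := (isCompact_sphere (0 : E3) 1).exists_bound_of_continuousOn hQ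
  obtain ⟨δ, hδ, hd⟩ := Metric.continuousOn_iff.1 hQ ξ₀ hξ₀ ε hε
  have hM0 : 0 ≤ M := (norm_nonneg _).trans (hM ξ₀ hξ₀)
  refine ⟨2 * M / δ ^ 2, by positivity, fun η hη => ?_⟩
  by_cases hlt : dist η ξ₀ < δ
  · have := (hd η hη hlt).le
    rw [Real.dist_eq] at this
    have : 0 ≤ 2 * M / δ ^ 2 * ‖η - ξ₀‖ ^ 2 := by positivity
    linarith
  · rw [dist_eq_norm, not_lt] at hlt
    have h1 : |Q η - Q ξ₀| ≤ 2 * M := by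
      have := abs_sub (Q η) (Q ξ₀)
      have a1 := hM η hη
      have a2 := hM ξ₀ hξ₀
      rw [Real.norm_eq_abs] at a1 a2
      linarith
    have h2 : 2 * M ≤ 2 * M / δ ^ 2 * ‖η - ξ₀‖ ^ 2 := by
      rw [div_mul_eq_mul_div, le_div_iff₀ (by positivity)]
      gcongr
    linarith

/-- Parseval's identity for an orthonormal triple of `ℝ³`. -/
lemma parseval_three {ζ e₁ e₂ : E3} (hζ : ‖ζ‖ = 1) (he₁ : ‖e₁‖ = 1) (he₂ : ‖e₂‖ = 1)
    (he₁e₂ : ⟪e₁, e₂⟫ = 0) (hζe₁ : ⟪ζ, e₁⟫ = 0) (hζe₂ : ⟪ζ, e₂⟫ = 0) (ξ : E3) :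
    ⟪ζ, ξ⟫ ^ 2 + ⟪e₁, ξ⟫ ^ 2 + ⟪e₂, ξ⟫ ^ 2 = ‖ξ‖ ^ 2 := by
  have ho : Orthonormal ℝ ![ζ, e₁, e₂] := by
    constructor
    · intro i; fin_cases i <;> simp [hζ, he₁, he₂]
    · intro i j hij
      fin_cases i <;> fin_cases j <;>
        simp_all [real_inner_comm]
  have hcard : Fintype.card (Fin 3) = Module.finrank ℝ E3 := by simp
  have hspan := ho.linearIndependent.span_eq_top_of_card_eq_finrank hcard
  have := (OrthonormalBasis.mk ho hspan.ge).sum_sq_inner_right ξ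
  simpa [Fin.sum_univ_three] using this

/-- Jump relation for the double-layer potential on a spherical cap. -/
theorem double_layer_jump_relation (ζ : E3) (hζ : ζ ∈ Metric.sphere (0 : E3) 1)
    (ρ : ℝ) (hρ0 : 0 < ρ) (hρ2 : ρ < 2)
    (e₁ e₂ : E3) (he₁ : ‖e₁‖ = 1) (he₂ : ‖e₂‖ = 1) (he₁e₂ : ⟪e₁, e₂⟫ = 0)
    (hζe₁ : ⟪ζ, e₁⟫ = 0) (hζe₂ : ⟪ζ, e₂⟫ = 0)
    (c : ℝ → E3)
    (hc : ∀ θ : ℝ, c θ = (1 - ρ) • ζ + Real.sqrt (ρ * (2 - ρ)) •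
      (Real.cos θ • e₁ + Real.sin θ • e₂))
    (Q : E3 → ℝ) (hQ : ContinuousOn Q (Metric.sphere (0 : E3) 1))
    (W : E3 → ℝ)
    (hW : ∀ ξ : E3, ξ ∈ Metric.sphere (0 : E3) 1 → ⟪ζ, ξ⟫ ≠ 1 - ρ →
      W ξ = (1 / (4 * π)) * ∫ θ in (0:ℝ)..(2 * π),
        (⟪ζ - (1 - ρ) • c θ, ξ - ⟪ξ, c θ⟫ • c θ⟫ / (1 - ⟪ξ, c θ⟫)) * Q (c θ))
    (ξ₀ : E3) (hξ₀ : ξ₀ ∈ Metric.sphere (0 : E3) 1) (hξ₀b : ⟪ζ, ξ₀⟫ = 1 - ρ)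
    (ν : E3) (hν : ν = -((Real.sqrt (ρ * (2 - ρ)))⁻¹ • (ζ - (1 - ρ) • ξ₀))) :
    Tendsto (fun τ : ℝ =>
        W ((Real.sqrt (1 + τ ^ 2))⁻¹ • (ξ₀ + τ • ν)) -
          W ((Real.sqrt (1 + τ ^ 2))⁻¹ • (ξ₀ - τ • ν)))
      (𝓝[>] 0) (𝓝 (-Q ξ₀)) := by
  have hζ1 : ‖ζ‖ = 1 := by simpa using hζ
  have hξ1 : ‖ξ₀‖ = 1 := by simpa using hξ₀
  set s := Real.sqrt (ρ * (2 - ρ)) with hs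
  have hs0 : 0 < s := Real.sqrt_pos.2 (mul_pos hρ0 (by linarith))
  have hs2 : s ^ 2 = ρ * (2 - ρ) := Real.sq_sqrt (mul_nonneg hρ0.le (by linarith))
  set a := 1 - ρ with ha
  have has : a ^ 2 + s ^ 2 = 1 := by rw [hs2, ha]; ring
  have hpars := parseval_three hζ1 he₁ he₂ he₁e₂ hζe₁ hζe₂ ξ₀
  have iζ : ⟪ζ, ζ⟫ = 1 := by rw [real_inner_self_eq_norm_sq, hζ1]; norm_num
  have i1 : ⟪e₁, e₁⟫ = 1 := by rw [real_inner_self_eq_norm_sq, he₁]; norm_num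
  have i2 : ⟪e₂, e₂⟫ = 1 := by rw [real_inner_self_eq_norm_sq, he₂]; norm_num
  have iξ : ⟪ξ₀, ξ₀⟫ = 1 := by rw [real_inner_self_eq_norm_sq, hξ1]; norm_num
  -- `(x, y)` plays the role of `(cos θ₀, sin θ₀)` where `ξ₀ = c(θ₀)`.
  obtain ⟨x, hx⟩ : ∃ x, ⟪e₁, ξ₀⟫ = s * x := ⟨⟪e₁, ξ₀⟫ / s, by field_simp⟩
  obtain ⟨y, hy⟩ : ∃ y, ⟪e₂, ξ₀⟫ = s * y := ⟨⟪e₂, ξ₀⟫ / s, by field_simp⟩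
  have hxy : x ^ 2 + y ^ 2 = 1 := by
    rw [hξ₀b, hx, hy, hξ1] at hpars
    have : s ^ 2 * (x ^ 2 + y ^ 2) = s ^ 2 * 1 := by linear_combination hpars - has
    exact mul_left_cancel₀ (by positivity) this
  have icc : ∀ θ, ⟪c θ, c θ⟫ = 1 := by
    intro θ
    rw [hc]
    simp only [inner_add_left, inner_add_right, real_inner_smul_left, real_inner_smul_right,
      iζ, i1, i2, he₁e₂, hζe₁, hζe₂, real_inner_comm ζ e₁, real_inner_comm ζ e₂,
      real_inner_comm e₁ e₂]
    linear_combination has + s ^ 2 * (sin_sq_add_cos_sq θ)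
  have iζc : ∀ θ, ⟪ζ, c θ⟫ = a := by
    intro θ
    rw [hc]
    simp only [inner_add_right, real_inner_smul_right, iζ, hζe₁, hζe₂]
    ring
  have iξc : ∀ θ, ⟪ξ₀, c θ⟫ = a ^ 2 + s ^ 2 * (x * cos θ + y * sin θ) := by
    intro θ
    rw [hc]
    simp only [inner_add_right, real_inner_smul_right, real_inner_comm ζ ξ₀,
      real_inner_comm e₁ ξ₀, real_inner_comm e₂ ξ₀, hx, hy, hξ₀b]
    ring
  have hcS : ∀ θ, c θ ∈ Metric.sphere (0 : E3) 1 := by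
    intro θ
    have := icc θ
    rw [real_inner_self_eq_norm_sq] at this
    simpa using (pow_eq_one_iff_of_nonneg (norm_nonneg _) two_ne_zero).1 this
  have hcc : Continuous c := by
    rw [funext hc]; fun_prop
  have hg : Continuous fun θ => Q (c θ) := hQ.comp_continuous hcc hcS
  have hmod : ∀ ε > 0, ∃ K ≥ 0, ∀ θ, |Q (c θ) - Q ξ₀| ≤
      ε + K * (1 - (x * cos θ + y * sin θ)) := by
    intro ε hε
    obtain ⟨K, hK, hb⟩ := sphere_modulus hQ hξ₀ hε
    refine ⟨K * (2 * s ^ 2), by positivity, fun θ => (hb _ (hcS θ)).trans_eq ?_⟩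
    rw [← real_inner_self_eq_norm_sq, inner_sub_left, inner_sub_right, inner_sub_right, icc, iξ,
      real_inner_comm ξ₀ (c θ), iξc]
    linear_combination -2 * K * has
  set R : ℝ → ℝ := fun t => Real.sqrt (1 + t ^ 2) with hR
  have hR0 : ∀ t, 0 < R t := fun t => Real.sqrt_pos.2 (by positivity)
  have hR2 : ∀ t, R t ^ 2 = 1 + t ^ 2 := fun t => Real.sq_sqrt (by positivity)
  have hRc : Continuous R := by fun_prop
  have hR00 : R 0 = 1 := by simp [hR]
  set ξ : ℝ → E3 := fun t => (R t)⁻¹ • (ξ₀ + t • ν) with hξ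
  -- `A t = ζ·ξ(t)`, and `A t - a = - t * H t` with `H 0 = s > 0`.
  set A : ℝ → ℝ := fun t => (R t)⁻¹ * (a - t * s) with hA
  set B : ℝ → ℝ := fun t => (R t)⁻¹ * (s + t * a) with hB
  set H : ℝ → ℝ := fun t => (R t)⁻¹ * (s + a * t / (R t + 1)) with hH
  have hRi : Continuous fun t => (R t)⁻¹ := hRc.inv₀ fun t => (hR0 t).ne'
  have hAc : Continuous A := hRi.mul (by fun_prop)
  have hBc : Continuous B := hRi.mul (by fun_prop)
  have hHc : Continuous H := hRi.mul (continuous_const.add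
    (Continuous.div (by fun_prop) (by fun_prop) fun t => by linarith [hR0 t]))
  have hAB : ∀ t, A t ^ 2 + B t ^ 2 = 1 := by
    intro t
    have := (hR0 t).ne'
    simp only [hA, hB]
    field_simp
    rw [hR2]
    linear_combination (1 + t ^ 2) * has
  have hAH : ∀ t, A t - a = -t * H t := by
    intro t
    have := (hR0 t).ne'
    have : R t + 1 ≠ 0 := by linarith [hR0 t]
    simp only [hA, hH]
    field_simp
    linear_combination -a * hR2 t
  have iξν : ⟪ζ, ν⟫ = -s := by
    rw [hν, inner_neg_right, real_inner_smul_right, inner_sub_right, real_inner_smul_right, iζ,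
      hξ₀b]
    field_simp
    linear_combination has
  have iνc : ∀ θ, ⟪ν, c θ⟫ = -(s * a) + s * a * (x * cos θ + y * sin θ) := by
    intro θ
    rw [hν, inner_neg_left, real_inner_smul_left, inner_sub_left, real_inner_smul_left, iζc, iξc]
    field_simp
    linear_combination a * has
  have iνξ : ⟪ξ₀, ν⟫ = 0 := by
    rw [hν, inner_neg_right, real_inner_smul_right, inner_sub_right, real_inner_smul_right, iξ,
      real_inner_comm, hξ₀b]
    ring
  have iνν : ⟪ν, ν⟫ = 1 := by
    have h1 : ⟪ν, ν⟫ = -(s⁻¹ * (⟪ζ, ν⟫ - a * ⟪ξ₀, ν⟫)) := by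
      nth_rw 1 [hν]
      rw [inner_neg_left, real_inner_smul_left, inner_sub_left, real_inner_smul_left]
    rw [h1, iξν, iνξ]
    field_simp
    ring
  have hξS : ∀ t, ξ t ∈ Metric.sphere (0 : E3) 1 := by
    intro t
    have h1 : ⟪ξ t, ξ t⟫ = 1 := by
      have := (hR0 t).ne'
      simp only [hξ, inner_add_left, inner_add_right, real_inner_smul_left, real_inner_smul_right,
        iξ, iνν, iνξ, real_inner_comm ξ₀ ν]
      field_simp
      rw [hR2]; ring
    rw [real_inner_self_eq_norm_sq] at h1
    simpa using (pow_eq_one_iff_of_nonneg (norm_nonneg _) two_ne_zero).1 h1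
  have hζξ : ∀ t, ⟪ζ, ξ t⟫ = A t := by
    intro t
    simp only [hξ, hA, inner_add_right, real_inner_smul_right, hξ₀b, iξν]
    ring
  have hξc : ∀ t θ, ⟪ξ t, c θ⟫ = a * A t + s * B t * (x * cos θ + y * sin θ) := by
    intro t θ
    simp only [hξ, hA, hB, inner_add_left, real_inner_smul_left, iξc, iνc]
    ring
  set J : ℝ → ℝ := fun t => ∫ θ in (0:ℝ)..(2 * π),
    (|t| * H t) / ((1 - a * A t) - (s * B t) * (x * cos θ + y * sin θ)) * Q (c θ) with hJ
  have hpq : ∀ t, (1 - a * A t) ^ 2 = (s * B t) ^ 2 + (|t| * H t) ^ 2 := by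
    intro t
    rw [mul_pow |t|, sq_abs]
    have h1 : t ^ 2 * H t ^ 2 = (A t - a) ^ 2 := by rw [hAH]; ring
    rw [h1]
    linear_combination (-s ^ 2) * hAB t + (A t ^ 2 - 1) * has
  have hH0 : H 0 = s := by simp [hH, hR00]
  have hA0 : A 0 = a := by simp [hA, hR00]
  have hB0 : B 0 = s := by simp [hB, hR00]
  have hHpos : ∀ᶠ t in 𝓝 (0:ℝ), 0 < H t :=
    hHc.continuousAt.eventually (lt_mem_nhds (by rw [hH0]; exact hs0))
  have hppos : ∀ᶠ t in 𝓝 (0:ℝ), 0 < 1 - a * A t := by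
    have : Continuous fun t => 1 - a * A t := by fun_prop
    refine this.continuousAt.eventually (lt_mem_nhds ?_)
    beta_reduce
    rw [hA0]; nlinarith
  have hmpos : ∀ᶠ t in 𝓝[≠] (0:ℝ), 0 < |t| * H t := by
    filter_upwards [nhdsWithin_le_nhds hHpos, self_mem_nhdsWithin] with t h1 h2
    exact mul_pos (abs_pos.2 h2) h1
  have hJlim : Tendsto J (𝓝[≠] 0) (𝓝 (2 * π * Q ξ₀)) := by
    refine poisson_tendsto (q₀ := s * s) hxy hg hmod (by positivity) ?_ ?_
      (nhdsWithin_le_nhds hppos) hmpos (Eventually.of_forall hpq)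
    · have : Continuous fun t => s * B t := by fun_prop
      have := this.tendsto 0
      rw [hB0] at this
      exact this.mono_left nhdsWithin_le_nhds
    · have : Continuous fun t => |t| * H t := by fun_prop
      have := this.tendsto 0
      rw [abs_zero, zero_mul] at this
      exact this.mono_left nhdsWithin_le_nhds
  set I := ∫ θ in (0:ℝ)..(2 * π), Q (c θ) with hI
  -- The potential splits into a part without jump and a signed Poisson integral.
  have hWξ : ∀ᶠ t in 𝓝[≠] (0:ℝ), ∀ σ : ℝ, -t = σ * |t| →
      W (ξ t) = (1 / (4 * π)) * (a * I + σ * J t) := by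
    filter_upwards [nhdsWithin_le_nhds hHpos, nhdsWithin_le_nhds hppos, hmpos,
      self_mem_nhdsWithin] with t h1 h2 h3 h4 σ hσ
    have hne : ⟪ζ, ξ t⟫ ≠ a := by
      rw [hζξ, ← sub_ne_zero, hAH]
      exact mul_ne_zero (neg_ne_zero.2 h4) h1.ne'
    rw [hW _ (hξS t) hne]
    congr 1
    rw [hI, hJ, ← intervalIntegral.integral_const_mul, ← intervalIntegral.integral_const_mul,
      ← intervalIntegral.integral_add ((continuous_const.fun_mul hg).intervalIntegrable _ _)
        ((continuous_const.fun_mul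
          ((poisson_continuous hxy h2 h3 (hpq t)).fun_mul hg)).intervalIntegrable _ _)]
    refine intervalIntegral.integral_congr fun θ _ => ?_
    have hD := (poisson_denom_pos hxy h2 h3 (hpq t) θ).ne'
    have hN : ⟪ζ - a • c θ, ξ t - ⟪ξ t, c θ⟫ • c θ⟫
        = a * (1 - ⟪ξ t, c θ⟫) + σ * (|t| * H t) := by
      rw [← mul_assoc, ← hσ, ← hAH]
      simp only [inner_sub_left, inner_sub_right, real_inner_smul_left, real_inner_smul_right,
        iζc, icc, hζξ, real_inner_comm (ξ t) (c θ)]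
      ring
    have hDe : 1 - ⟪ξ t, c θ⟫ = (1 - a * A t) - (s * B t) * (x * cos θ + y * sin θ) := by
      rw [hξc]; ring
    beta_reduce
    rw [hN, hDe]
    field_simp
  have hpos : Tendsto (fun τ : ℝ => τ) (𝓝[>] 0) (𝓝[≠] 0) :=
    tendsto_id.mono_right (nhdsWithin_mono _ fun t ht => (Set.mem_Ioi.1 ht).ne')
  have hneg : Tendsto (fun τ : ℝ => -τ) (𝓝[>] 0) (𝓝[≠] 0) := by
    refine tendsto_nhdsWithin_iff.2 ⟨?_, ?_⟩
    · have := (continuous_neg (G := ℝ)).tendsto 0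
      rw [neg_zero] at this
      exact this.mono_left nhdsWithin_le_nhds
    · filter_upwards [self_mem_nhdsWithin] with t ht
      exact neg_ne_zero.2 (Set.mem_Ioi.1 ht).ne'
  have hlim : Tendsto (fun τ => (1 / (4 * π)) * (-J τ - J (-τ))) (𝓝[>] 0) (𝓝 (-Q ξ₀)) := by
    have := (((hJlim.comp hpos).neg).sub (hJlim.comp hneg)).const_mul (1 / (4 * π))
    have hpi := Real.pi_ne_zero
    have e : 1 / (4 * π) * (-(2 * π * Q ξ₀) - 2 * π * Q ξ₀) = -Q ξ₀ := by
      field_simp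
      ring
    rw [e] at this
    exact this
  refine hlim.congr' ?_
  filter_upwards [hpos.eventually hWξ, hneg.eventually hWξ, self_mem_nhdsWithin] with τ h1 h2 h3
  have h3 : 0 < τ := h3
  have e1 := h1 (-1) (by rw [abs_of_pos h3]; ring)
  have e2 := h2 1 (by rw [abs_neg, abs_of_pos h3]; ring)
  have e3 : ξ (-τ) = (R τ)⁻¹ • (ξ₀ - τ • ν) := by
    simp only [hξ, hR, neg_sq, neg_smul, sub_eq_add_neg]
  rw [← e3]
  change _ = W (ξ τ) - W (ξ (-τ))
  rw [e1, e2]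
  ring

end
end
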